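/- arXiv:2302.14151 — 6 statements merged into one kernel-verified Lean document; each statement's English description precedes it below -/
import Mathlib

section
/- For the bilinear set over a network polytope with a single simplex variable (m = 1), every extreme point of the normalized projection-cone restriction C^l has all of its components in {0,1}; i.e., every extreme point of C^l corresponding to a class-l EC&R inequality can be scaled so that all aggregation weights are 0 or 1. -/
/-- Weight vector for the `m = 1` EC&R projection cone over a network polytope:
components `γ⁺ γ⁻ θ⁺ θ⁻ : V → ℝ` (weights of positive/negative flow-balance constraints
multiplied by `y₁` resp. `1 - y₁`) and `λ μ η ρ β⁺ β⁻ : A → ℝ` (weights of bound and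
bilinear constraints), in this order. -/
abbrev ECRWeights (V A : Type) : Type :=
  (V → ℝ) × (V → ℝ) × (V → ℝ) × (V → ℝ) ×
  (A → ℝ) × (A → ℝ) × (A → ℝ) × (A → ℝ) × (A → ℝ) × (A → ℝ)

namespace ECRWeights

variable {V A : Type}

def γp (w : ECRWeights V A) : V → ℝ := w.1
def γm (w : ECRWeights V A) : V → ℝ := w.2.1
def θp (w : ECRWeights V A) : V → ℝ := w.2.2.1
def θm (w : ECRWeights V A) : V → ℝ := w.2.2.2.1
def lam (w : ECRWeights V A) : A → ℝ := w.2.2.2.2.1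
def mu (w : ECRWeights V A) : A → ℝ := w.2.2.2.2.2.1
def η (w : ECRWeights V A) : A → ℝ := w.2.2.2.2.2.2.1
def ρ (w : ECRWeights V A) : A → ℝ := w.2.2.2.2.2.2.2.1
def βp (w : ECRWeights V A) : A → ℝ := w.2.2.2.2.2.2.2.2.1
def βm (w : ECRWeights V A) : A → ℝ := w.2.2.2.2.2.2.2.2.2

end ECRWeights

open ECRWeights in
/-- Membership in the normalized projection-cone restriction `C^l` for the `m = 1` case. -/
def memCl {V A : Type} [Fintype V] [DecidableEq A]
    (E : V → A → ℝ) (l : A) (s : ℝ) (w : ECRWeights V A) : Prop :=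
  (∀ v, 0 ≤ γp w v) ∧ (∀ v, 0 ≤ γm w v) ∧ (∀ v, 0 ≤ θp w v) ∧ (∀ v, 0 ≤ θm w v) ∧
  (∀ a, 0 ≤ lam w a) ∧ (∀ a, 0 ≤ mu w a) ∧ (∀ a, 0 ≤ η w a) ∧ (∀ a, 0 ≤ ρ w a) ∧
  (∀ a, 0 ≤ βp w a) ∧ (∀ a, 0 ≤ βm w a) ∧
  βp w l = 0 ∧ βm w l = 0 ∧
  ∀ a, (∑ v, E v a * ((γp w v - γm w v) - (θp w v - θm w v)))
      + η w a - ρ w a - lam w a + mu w a + βp w a - βm w a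
      = s * (if a = l then 1 else 0)

/-!
Multiplying a totally unimodular matrix by signs, repeating its columns and appending unit columns
keep it totally unimodular. The equations of `C^l` have such a matrix, built from the transposed
incidence matrix, and `± e_l` as right-hand side. Up to the equations `β⁺ l = β⁻ l = 0`, which only
pass to a face, `C^l` is therefore a polyhedron `{x | 0 ≤ x ∧ M x = b}` for which even the
augmented matrix `[M | b]` is totally unimodular. The columns of `M` on the support of an extreme
point are independent, so the nonzero coordinates solve a square system, and Cramer's rule writes
each of them as a quotient of two minors of `[M | b]`, that is, of two elements of `{0, 1, -1}`.
-/

open Matrix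

section ExtremePoints

variable {𝕜 n : Type*} [Field 𝕜] [LinearOrder 𝕜] [IsStrictOrderedRing 𝕜]

lemma eq_zero_of_add_mem_of_sub_mem_of_mem_extremePoints {E : Type*} [AddCommGroup E] [Module 𝕜 E]
    {P : Set E} {x d : E} (hx : x ∈ P.extremePoints 𝕜) (hadd : x + d ∈ P) (hsub : x - d ∈ P) :
    d = 0 := by
  have hmid : x ∈ openSegment 𝕜 (x + d) (x - d) :=
    ⟨2⁻¹, 2⁻¹, by positivity, by positivity, by norm_num, by module⟩
  simpa using hx.2 hadd hsub hmid

lemma isExtreme_sep_forall_mem_eq_zero {P : Set (n → 𝕜)} (hP : ∀ x ∈ P, 0 ≤ x) (Z : Set n) :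
    IsExtreme 𝕜 P {x ∈ P | ∀ j ∈ Z, x j = 0} := by
  refine ⟨Set.sep_subset _ _, ?_⟩
  rintro x hx y hy _ ⟨-, hzero⟩ ⟨a, b, ha, hb, -, rfl⟩
  refine ⟨hx, fun j hj ↦ ?_⟩
  have hsum : a * x j + b * y j = 0 := hzero j hj
  have hxj : 0 ≤ x j := hP x hx j
  have hyj : 0 ≤ y j := hP y hy j
  have : a * x j = 0 := ((add_eq_zero_iff_of_nonneg (by positivity) (by positivity)).mp hsum).1
  exact (mul_eq_zero.mp this).resolve_left ha.ne'

lemma exists_pos_forall_mul_abs_le [Finite n] {x d : n → 𝕜} (hx : 0 ≤ x)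
    (hsupp : Function.support d ⊆ Function.support x) : ∃ ε > 0, ∀ j, ε * |d j| ≤ x j := by
  cases nonempty_fintype n
  set C := ∑ j, |d j| / x j
  have hnonneg : ∀ j, 0 ≤ |d j| / x j := fun j ↦ div_nonneg (abs_nonneg _) (hx j)
  have hC : 0 ≤ C := Finset.sum_nonneg fun j _ ↦ hnonneg j
  refine ⟨(C + 1)⁻¹, by positivity, fun j ↦ ?_⟩
  rw [inv_mul_le_iff₀ (by positivity)]
  by_cases hxj : x j = 0
  · have hdj : d j = 0 := by simpa [hxj] using mt (@hsupp j)
    simp [hxj, hdj]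
  · have hle : |d j| / x j ≤ C :=
      Finset.single_le_sum (fun i _ ↦ hnonneg i) (Finset.mem_univ j)
    have hpos : 0 < x j := (hx j).lt_of_ne' hxj
    rw [div_le_iff₀ hpos] at hle
    linarith

variable [Fintype n]

/-- The standard-form polyhedron of linear programming with constraint matrix `A` and right-hand
side `b`. -/
def standardPolyhedron {m R : Type*} [CommSemiring R] [LE R] (A : Matrix m n R) (b : m → R) :
    Set (n → R) :=
  {x | 0 ≤ x ∧ A *ᵥ x = b}

lemma linearIndepOn_col_support_of_mem_extremePoints {m : Type*} {A : Matrix m n 𝕜} {b : m → 𝕜}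
    {x : n → 𝕜} (hx : x ∈ (standardPolyhedron A b).extremePoints 𝕜) :
    LinearIndepOn 𝕜 A.col (Function.support x) := by
  rw [linearIndepOn_iff]
  intro d hd hker
  have hAd : A *ᵥ d = 0 := by
    rw [← hker, Finsupp.linearCombination_apply, Finsupp.sum_fintype _ _ (by simp)]
    ext i
    simp [mulVec, dotProduct, mul_comm]
  obtain ⟨hx₀, hAx⟩ := hx.1
  obtain ⟨ε, hε, hle⟩ := exists_pos_forall_mul_abs_le (d := d) hx₀
    (by simpa [Finsupp.mem_supported] using hd)
  have hbound : ∀ j, |ε * d j| ≤ x j := fun j ↦ by simpa [abs_mul, abs_of_pos hε] using hle j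
  have hadd : x + ε • ⇑d ∈ standardPolyhedron A b :=
    ⟨fun j ↦ by simpa using neg_le_iff_add_nonneg'.mp (abs_le.mp (hbound j)).1,
      by rw [mulVec_add, mulVec_smul, hAd, hAx, smul_zero, add_zero]⟩
  have hsub : x - ε • ⇑d ∈ standardPolyhedron A b :=
    ⟨fun j ↦ by simpa using (abs_le.mp (hbound j)).2,
      by rw [mulVec_sub, mulVec_smul, hAd, hAx, smul_zero, sub_zero]⟩
  have hεd := eq_zero_of_add_mem_of_sub_mem_of_mem_extremePoints hx hadd hsub
  exact DFunLike.coe_injective ((smul_eq_zero.mp hεd).resolve_left hε.ne')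

end ExtremePoints

section BasicSolutions

variable {K m n : Type*} [Field K] [Fintype n]

lemma exists_submatrix_det_ne_zero_of_linearIndependent_col [DecidableEq n] [Finite m]
    {A : Matrix m n K} (hA : LinearIndependent K A.col) :
    ∃ r : n → m, (A.submatrix r id).det ≠ 0 := by
  cases nonempty_fintype m
  have hcard : Module.finrank K (Submodule.span K (Set.range A.row)) = Fintype.card n := by
    rw [← rank_eq_finrank_span_row, ← rank_transpose, LinearIndependent.rank_matrix hA]
  obtain ⟨f, hf, -, hindep⟩ := Submodule.exists_fun_fin_finrank_span_eq K (Set.range A.row)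
  choose r hr using hf
  let e : n ≃ Fin _ := Fintype.equivFinOfCardEq hcard.symm
  have hrow : (A.submatrix (r ∘ e) id).row = f ∘ e := funext fun i ↦ hr (e i)
  refine ⟨r ∘ e, ?_⟩
  rw [← isUnit_iff_ne_zero, ← isUnit_iff_isUnit_det, ← linearIndependent_rows_iff_isUnit, hrow]
  exact hindep.comp _ e.injective

lemma det_mul_apply_eq_det_updateCol_mulVec {R : Type*} [CommRing R] [DecidableEq n]
    (B : Matrix n n R) (x : n → R) (j : n) : B.det * x j = (B.updateCol j (B *ᵥ x)).det := by
  rw [← cramer_apply, cramer_eq_adjugate_mulVec, mulVec_mulVec, adjugate_mul, smul_mulVec,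
    one_mulVec, Pi.smul_apply, smul_eq_mul]

lemma mem_range_signCast_of_mulVec_eq_of_isTotallyUnimodular [Finite m] {A : Matrix m n K}
    {b : m → K} (htu : (fromCols A (replicateCol Unit b)).IsTotallyUnimodular)
    (hA : LinearIndependent K A.col) {x : n → K} (hx : A *ᵥ x = b) (j : n) :
    x j ∈ Set.range (SignType.cast : SignType → K) := by
  classical
  obtain ⟨r, hr⟩ := exists_submatrix_det_ne_zero_of_linearIndependent_col hA
  set B := A.submatrix r id
  have hBx : B *ᵥ x = b ∘ r := by
    rw [← hx]; rfl
  have hB : B = (fromCols A (replicateCol Unit b)).submatrix r Sum.inl := rfl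
  have hupdate : B.updateCol j (b ∘ r) = (fromCols A (replicateCol Unit b)).submatrix r
      (Function.update Sum.inl j (Sum.inr ())) := by
    ext i k
    obtain rfl | hk := eq_or_ne k j
    · simp
    · simp [hk, B]
  rw [isTotallyUnimodular_iff_fintype] at htu
  obtain ⟨σ, hσ⟩ := htu n r Sum.inl
  obtain ⟨τ, hτ⟩ := htu n r (Function.update Sum.inl j (Sum.inr ()))
  rw [← hB] at hσ
  have hcramer := det_mul_apply_eq_det_updateCol_mulVec B x j
  rw [hBx, hupdate, ← hτ, ← hσ] at hcramer
  rw [← hσ] at hr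
  cases σ with
  | zero => exact absurd SignType.coe_zero hr
  | pos => exact ⟨τ, by simpa using hcramer.symm⟩
  | neg => exact ⟨-τ, by simpa [neg_eq_iff_eq_neg] using hcramer.symm⟩

end BasicSolutions

lemma eq_zero_or_one_of_mem_extremePoints_of_isTotallyUnimodular {𝕜 m n : Type*} [Field 𝕜]
    [LinearOrder 𝕜] [IsStrictOrderedRing 𝕜] [Finite m] [Fintype n] {A : Matrix m n 𝕜} {b : m → 𝕜}
    (htu : (fromCols A (replicateCol Unit b)).IsTotallyUnimodular)
    {x : n → 𝕜} (hx : x ∈ (standardPolyhedron A b).extremePoints 𝕜) (j : n) :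
    x j = 0 ∨ x j = 1 := by
  classical
  by_cases hj : x j = 0
  · exact .inl hj
  let S := Function.support x
  let A' := A.submatrix id (Subtype.val : S → n)
  have htu' : (fromCols A' (replicateCol Unit b)).IsTotallyUnimodular := by
    convert htu.submatrix id (Sum.map Subtype.val id) using 1
    ext i (k | k) <;> rfl
  have hindep : LinearIndependent 𝕜 A'.col := linearIndepOn_col_support_of_mem_extremePoints hx
  obtain ⟨hx₀, hAx⟩ := hx.1
  have hsolve : A' *ᵥ (fun k ↦ x k) = b := by
    rw [← hAx]
    ext i
    refine Fintype.sum_of_injective Subtype.val Subtype.val_injective _ _ (fun k hk ↦ ?_)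
      fun _ ↦ rfl
    have hxk : x k = 0 := by simpa [S] using hk
    rw [hxk, mul_zero]
  obtain ⟨σ, hσ⟩ :=
    mem_range_signCast_of_mulVec_eq_of_isTotallyUnimodular htu' hindep hsolve ⟨j, hj⟩
  have hxj : 0 ≤ x j := hx₀ j
  cases σ with
  | zero => exact .inl (by simpa using hσ.symm)
  | pos => exact .inr (by simpa using hσ.symm)
  | neg =>
    have : x j = -1 := by simpa using hσ.symm
    linarith

section TotallyUnimodular

variable {R m n : Type*} [CommRing R]

lemma isTotallyUnimodular_signed_cols {A : Matrix m n R} (hA : A.IsTotallyUnimodular)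
    (σ : n → SignType) : (of fun i j ↦ (σ j : R) * A i j).IsTotallyUnimodular := by
  rw [isTotallyUnimodular_iff] at hA ⊢
  intro k f g
  obtain ⟨τ, hτ⟩ := hA k f g
  have hprod : ((∏ j, σ (g j) : SignType) : R) = ∏ j, (σ (g j) : R) :=
    map_prod SignType.castHom _ _
  refine ⟨(∏ j, σ (g j)) * τ, ?_⟩
  rw [SignType.coe_mul, hprod, hτ]
  exact (det_mul_row (fun j ↦ (σ (g j) : R)) (A.submatrix f g)).symm

lemma isTotallyUnimodular_fromCols_single [DecidableEq m] {A : Matrix m n R}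
    (hA : A.IsTotallyUnimodular) (i : m) {s : R} (hs : s ∈ Set.range SignType.cast) :
    (fromCols A (replicateCol Unit (Pi.single i s))).IsTotallyUnimodular := by
  obtain ⟨σ, rfl⟩ := hs
  rw [← transpose_isTotallyUnimodular_iff, transpose_fromCols, transpose_replicateCol]
  exact hA.transpose.fromRows_unitlike fun _ _ ↦ ⟨i, σ, rfl⟩

lemma det_mem_range_signCast_of_col_eq_single {k : ℕ} {M : Matrix (Fin (k + 1)) (Fin (k + 1)) R}
    {i j : Fin (k + 1)} {σ : SignType} (hcol : M.col j = Pi.single i (σ : R))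
    (hminor : (M.submatrix i.succAbove j.succAbove).det ∈ Set.range SignType.cast) :
    M.det ∈ Set.range SignType.cast := by
  obtain ⟨τ, hτ⟩ := hminor
  refine ⟨(-1) ^ (i + j : ℕ) * σ * τ, ?_⟩
  have hentry : ∀ i', M i' j = (Pi.single i (σ : R) : Fin (k + 1) → R) i' := congrFun hcol
  rw [det_succ_column M j, Fintype.sum_eq_single i fun i' hi' ↦ by simp [hentry, hi']]
  simp [hentry, hτ]

/-- The node-arc incidence matrix of a directed graph whose arc `a` goes from `t a` to `h a`:
tails are counted with `+1` and heads with `-1`, so the column of a loop vanishes. -/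
def arcIncidenceMatrix (R : Type*) [CommRing R] {V A : Type*} [DecidableEq V] (t h : A → V) :
    Matrix V A R :=
  of fun v a ↦ (if t a = v then 1 else 0) - (if h a = v then 1 else 0)

lemma indicator_eq_or_exists_eq_single {ι V : Type*} [DecidableEq ι] [DecidableEq V] {f : ι → V}
    (hf : f.Injective) (v : V) :
    (fun i ↦ if v = f i then (1 : R) else 0) = 0 ∨
      ∃ i, (fun i ↦ if v = f i then (1 : R) else 0) = Pi.single i 1 := by
  by_cases hv : v ∈ Set.range f
  · obtain ⟨i, rfl⟩ := hv
    exact .inr ⟨i, by ext; simp [Pi.single_apply, hf.eq_iff, eq_comm]⟩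
  · exact .inl (funext fun i ↦ if_neg fun hi ↦ hv ⟨i, hi.symm⟩)

lemma exists_col_eq_single_or_det_eq_zero {V A : Type*} [DecidableEq V] (t h : A → V) {k : ℕ}
    {f : Fin (k + 1) → V} (hf : f.Injective) (g : Fin (k + 1) → A) :
    (∃ j i, ∃ σ : SignType,
      ((arcIncidenceMatrix R t h).submatrix f g).col j = Pi.single i (σ : R)) ∨
    ((arcIncidenceMatrix R t h).submatrix f g).det = 0 := by
  set M := (arcIncidenceMatrix R t h).submatrix f g
  have hcol : ∀ j, M.col j =
      (fun i ↦ if t (g j) = f i then 1 else 0) - fun i ↦ if h (g j) = f i then 1 else 0 :=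
    fun _ ↦ rfl
  rw [or_iff_not_imp_left]
  intro hnot
  have hsum : ∀ j, ∑ i, M.col j i = 0 := by
    intro j
    obtain ht | ⟨i, ht⟩ := indicator_eq_or_exists_eq_single (R := R) hf (t (g j)) <;>
      obtain hh | ⟨i', hh⟩ := indicator_eq_or_exists_eq_single (R := R) hf (h (g j))
    · exact absurd ⟨j, 0, 0, by simp [hcol, ht, hh]⟩ hnot
    · exact absurd ⟨j, i', -1, by simp [hcol, ht, hh, Pi.single_neg]⟩ hnot
    · exact absurd ⟨j, i, 1, by simp [hcol, ht, hh]⟩ hnot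
    · rw [hcol, ht, hh]
      simp
  rw [← det_transpose]
  refine det_eq_zero_of_mulVec_eq_zero_of_mem_nonZeroDivisors (v := 1) ?_ (i := 0) (one_mem _)
  ext j
  simpa [mulVec, dotProduct] using hsum j

lemma isTotallyUnimodular_arcIncidenceMatrix {V A : Type*} [DecidableEq V] (t h : A → V) :
    (arcIncidenceMatrix R t h).IsTotallyUnimodular := by
  intro k f g hf hg
  induction k with
  | zero => exact ⟨1, by simp⟩
  | succ k ih =>
    obtain ⟨j, i, σ, hcol⟩ | hdet := exists_col_eq_single_or_det_eq_zero (R := R) t h hf g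
    · exact det_mem_range_signCast_of_col_eq_single hcol
        (ih _ _ (hf.comp Fin.succAbove_right_injective) (hg.comp Fin.succAbove_right_injective))
    · exact ⟨0, by simp [hdet]⟩

end TotallyUnimodular

namespace ECRWeights

variable {V A : Type}

/-- The index set of the ten blocks of a weight vector: `Sum.inl (k, v)` stands for the `k`-th of
`γ⁺, γ⁻, θ⁺, θ⁻` at the node `v` and `Sum.inr (k, a)` for the `k`-th of `λ, μ, η, ρ, β⁺, β⁻` at the
arc `a`. -/
abbrev Coordinate (V A : Type) : Type :=
  Fin 4 × V ⊕ Fin 6 × A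

/-- The identification of weight vectors with real functions on `Coordinate V A`. -/
def flatten : ECRWeights V A ≃ₗ[ℝ] (Coordinate V A → ℝ) :=
  LinearEquiv.symm
    { toFun := fun x ↦
        (fun v ↦ x (.inl (0, v)), fun v ↦ x (.inl (1, v)), fun v ↦ x (.inl (2, v)),
          fun v ↦ x (.inl (3, v)), fun a ↦ x (.inr (0, a)), fun a ↦ x (.inr (1, a)),
          fun a ↦ x (.inr (2, a)), fun a ↦ x (.inr (3, a)), fun a ↦ x (.inr (4, a)),
          fun a ↦ x (.inr (5, a)))
      invFun := fun w ↦ Sum.elim (fun i ↦ ![γp w, γm w, θp w, θm w] i.1 i.2)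
        fun i ↦ ![lam w, mu w, η w, ρ w, βp w, βm w] i.1 i.2
      map_add' := fun _ _ ↦ rfl
      map_smul' := fun _ _ ↦ rfl
      left_inv := fun x ↦ by
        ext (⟨k, v⟩ | ⟨k, a⟩) <;> fin_cases k <;> rfl
      right_inv := fun _ ↦ rfl }

/-- The sign with which each weight enters the equations of `C^l`. -/
def coordinateSign : Coordinate V A → SignType :=
  Sum.elim (fun i ↦ ![1, -1, -1, 1] i.1) fun i ↦ ![-1, 1, 1, -1, 1, -1] i.1

/-- The coefficient matrix of the equations of `C^l`: up to sign, the weights of a node `v` share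
the column `E v`, and those of an arc share its unit column. -/
def coefficientMatrix [DecidableEq A] (E : Matrix V A ℝ) : Matrix A (Coordinate V A) ℝ :=
  of fun a i ↦ coordinateSign i * fromCols Eᵀ 1 a (Sum.map Prod.snd Prod.snd i)

lemma isTotallyUnimodular_coefficientMatrix [DecidableEq A] {E : Matrix V A ℝ}
    (hE : E.IsTotallyUnimodular) : (coefficientMatrix E).IsTotallyUnimodular :=
  isTotallyUnimodular_signed_cols
    (((fromCols_one_isTotallyUnimodular_iff _).mpr hE.transpose).submatrix id _) coordinateSign

lemma coefficientMatrix_mulVec_flatten [Fintype V] [Fintype A] [DecidableEq A] (E : Matrix V A ℝ)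
    (w : ECRWeights V A) (a : A) :
    (coefficientMatrix E *ᵥ flatten w) a =
      (∑ v, E v a * ((γp w v - γm w v) - (θp w v - θm w v)))
        + η w a - ρ w a - lam w a + mu w a + βp w a - βm w a := by
  have hnode : ∑ i : Fin 4 × V, coefficientMatrix E a (.inl i) * flatten w (.inl i) =
      ∑ v, E v a * ((γp w v - γm w v) - (θp w v - θm w v)) := by
    rw [Fintype.sum_prod_type_right]
    refine Fintype.sum_congr _ _ fun v ↦ ?_
    calc ∑ k, coefficientMatrix E a (.inl (k, v)) * flatten w (.inl (k, v))
        = E v a * γp w v + -E v a * γm w v + -E v a * θp w v + E v a * θm w v := by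
          simp [Fin.sum_univ_four, coefficientMatrix, coordinateSign, flatten]
      _ = E v a * ((γp w v - γm w v) - (θp w v - θm w v)) := by ring
  have harc : ∑ i : Fin 6 × A, coefficientMatrix E a (.inr i) * flatten w (.inr i) =
      -lam w a + mu w a + η w a - ρ w a + βp w a - βm w a := by
    rw [Fintype.sum_prod_type_right, Fintype.sum_eq_single a fun a' ha' ↦ by
      simp [coefficientMatrix, one_apply_ne ha'.symm]]
    simp [Fin.sum_univ_six, coefficientMatrix, coordinateSign, flatten, sub_eq_add_neg]
  rw [mulVec, dotProduct, Fintype.sum_sum_type, hnode, harc]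
  ring

lemma flatten_nonneg_iff {w : ECRWeights V A} :
    0 ≤ flatten w ↔ (∀ v, 0 ≤ γp w v) ∧ (∀ v, 0 ≤ γm w v) ∧ (∀ v, 0 ≤ θp w v) ∧
      (∀ v, 0 ≤ θm w v) ∧ (∀ a, 0 ≤ lam w a) ∧ (∀ a, 0 ≤ mu w a) ∧ (∀ a, 0 ≤ η w a) ∧
      (∀ a, 0 ≤ ρ w a) ∧ (∀ a, 0 ≤ βp w a) ∧ ∀ a, 0 ≤ βm w a := by
  simp [Pi.le_def, Fin.forall_fin_succ, flatten, and_assoc]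

lemma memCl_iff_flatten_mem [Fintype V] [Fintype A] [DecidableEq A] {E : Matrix V A ℝ} {l : A}
    {s : ℝ} {w : ECRWeights V A} :
    memCl E l s w ↔ flatten w ∈ {x ∈ standardPolyhedron (coefficientMatrix E) (Pi.single l s) |
      ∀ i ∈ ({.inr (4, l), .inr (5, l)} : Set (Coordinate V A)), x i = 0} := by
  have hrhs : ∀ a, s * (if a = l then 1 else 0) = (Pi.single l s : A → ℝ) a := by
    simp [Pi.single_apply]
  have hzero : (∀ i ∈ ({.inr (4, l), .inr (5, l)} : Set (Coordinate V A)), flatten w i = 0) ↔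
      βp w l = 0 ∧ βm w l = 0 := by
    simp [flatten]
  simp only [memCl, standardPolyhedron, Set.mem_ofPred_eq, flatten_nonneg_iff, funext_iff,
    coefficientMatrix_mulVec_flatten, hrhs, hzero]
  tauto

lemma flatten_mem_extremePoints_standardPolyhedron [Fintype V] [Fintype A] [DecidableEq A]
    {E : Matrix V A ℝ} {l : A} {s : ℝ} {w : ECRWeights V A}
    (hw : w ∈ Set.extremePoints ℝ {w' : ECRWeights V A | memCl E l s w'}) :
    flatten w ∈ (standardPolyhedron (coefficientMatrix E) (Pi.single l s)).extremePoints ℝ := by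
  set P := standardPolyhedron (coefficientMatrix E) (Pi.single l s)
  set F := {x ∈ P | ∀ i ∈ ({.inr (4, l), .inr (5, l)} : Set (Coordinate V A)), x i = 0}
  have hface : IsExtreme ℝ P F := isExtreme_sep_forall_mem_eq_zero (fun _ hx ↦ hx.1) _
  have himage : flatten '' {w' | memCl E l s w'} = F := by
    rw [← Set.image_preimage_eq F flatten.surjective]
    exact congrArg _ (Set.ext fun _ ↦ memCl_iff_flatten_mem)
  refine hface.extremePoints_subset_extremePoints ?_
  rw [← himage, ← image_extremePoints]
  exact Set.mem_image_of_mem flatten hw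

end ECRWeights

open ECRWeights in
theorem extremePoint_mem_Cl_zero_one_general
    {V A : Type} [Fintype V] [Finite A] [DecidableEq A]
    (E : Matrix V A ℝ) (hE : E.IsTotallyUnimodular)
    (l : A) (s : ℝ) (hs : s ∈ Set.range SignType.cast)
    (w : ECRWeights V A)
    (hw : w ∈ Set.extremePoints ℝ {w' : ECRWeights V A | memCl E l s w'}) :
    (∀ v, γp w v = 0 ∨ γp w v = 1) ∧ (∀ v, γm w v = 0 ∨ γm w v = 1) ∧
    (∀ v, θp w v = 0 ∨ θp w v = 1) ∧ (∀ v, θm w v = 0 ∨ θm w v = 1) ∧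
    (∀ a, lam w a = 0 ∨ lam w a = 1) ∧ (∀ a, mu w a = 0 ∨ mu w a = 1) ∧
    (∀ a, η w a = 0 ∨ η w a = 1) ∧ (∀ a, ρ w a = 0 ∨ ρ w a = 1) ∧
    (∀ a, βp w a = 0 ∨ βp w a = 1) ∧ (∀ a, βm w a = 0 ∨ βm w a = 1) := by
  cases nonempty_fintype A
  have htu : (fromCols (coefficientMatrix E)
      (replicateCol Unit (Pi.single l s))).IsTotallyUnimodular :=
    isTotallyUnimodular_fromCols_single (isTotallyUnimodular_coefficientMatrix hE) l hs
  have h01 := eq_zero_or_one_of_mem_extremePoints_of_isTotallyUnimodular htu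
    (flatten_mem_extremePoints_standardPolyhedron hw)
  exact ⟨fun v ↦ h01 (.inl (0, v)), fun v ↦ h01 (.inl (1, v)), fun v ↦ h01 (.inl (2, v)),
    fun v ↦ h01 (.inl (3, v)), fun a ↦ h01 (.inr (0, a)), fun a ↦ h01 (.inr (1, a)),
    fun a ↦ h01 (.inr (2, a)), fun a ↦ h01 (.inr (3, a)), fun a ↦ h01 (.inr (4, a)),
    fun a ↦ h01 (.inr (5, a))⟩

open ECRWeights in
/-- For the bilinear set over a network polytope with a single simplex variable (`m = 1`),
every extreme point of the normalized projection-cone restriction `C^l` has all of its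
components in `{0, 1}`. -/
theorem extremePoint_mem_Cl_zero_one
    {V A : Type} [Fintype V] [Fintype A] [DecidableEq V] [DecidableEq A]
    (t h : A → V) (hloop : ∀ a, t a ≠ h a)
    (E : V → A → ℝ)
    (hE : ∀ v a, E v a = (if t a = v then (1 : ℝ) else 0) - (if h a = v then 1 else 0))
    (l : A) (s : ℝ) (hs : s = 1 ∨ s = -1)
    (w : ECRWeights V A)
    (hw : w ∈ Set.extremePoints ℝ {w' : ECRWeights V A | memCl E l s w'}) :
    (∀ v, γp w v = 0 ∨ γp w v = 1) ∧ (∀ v, γm w v = 0 ∨ γm w v = 1) ∧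
    (∀ v, θp w v = 0 ∨ θp w v = 1) ∧ (∀ v, θm w v = 0 ∨ θm w v = 1) ∧
    (∀ a, lam w a = 0 ∨ lam w a = 1) ∧ (∀ a, mu w a = 0 ∨ mu w a = 1) ∧
    (∀ a, η w a = 0 ∨ η w a = 1) ∧ (∀ a, ρ w a = 0 ∨ ρ w a = 1) ∧
    (∀ a, βp w a = 0 ∨ βp w a = 1) ∧ (∀ a, βm w a = 0 ∨ βm w a = 1) := by
  obtain rfl : E = arcIncidenceMatrix ℝ t h := funext₂ hE
  have hs' : s ∈ Set.range (SignType.cast : SignType → ℝ) := by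
    rcases hs with rfl | rfl
    exacts [⟨1, by simp⟩, ⟨-1, by simp⟩]
  exact extremePoint_mem_Cl_zero_one_general _ (isTotallyUnimodular_arcIncidenceMatrix t h) l s hs'
    w hw
end

section
/- At every extreme point π̄ of C^l (the m = 1 cone over a network polytope), for each node v ∈ V at most one of the four components γ⁺(v), γ⁻(v), θ⁺(v), θ⁻(v) is positive; that is, a node's positive and negative flow-balance inequalities cannot both receive positive aggregation weight, nor can the same flow-balance inequality receive positive weight both with multiplier y₁ and with multiplier 1 − y₁. -/
/-!
At a node `v`, the weights `γ⁺ v`, `γ⁻ v`, `θ⁺ v`, `θ⁻ v` enter the defining equations of `C^l` only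
through the single number `(γ⁺ v - γ⁻ v) - (θ⁺ v - θ⁻ v)`. If two of the four are positive, they
can be shifted jointly, in two opposite directions, without changing this number or violating
nonnegativity, so the point is the midpoint of a nondegenerate segment in `C^l`.
-/

theorem eq_zero_of_mem_extremePoints_of_sub_mem_of_add_mem {𝕜 M : Type*} [Ring 𝕜] [LinearOrder 𝕜]
    [IsStrictOrderedRing 𝕜] [Invertible (2 : 𝕜)] [AddCommGroup M] [Module 𝕜 M] {S : Set M} {x d : M}
    (hx : x ∈ S.extremePoints 𝕜) (hsub : x - d ∈ S) (hadd : x + d ∈ S) : d = 0 :=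
  sub_eq_self.mp (hx.2 hsub hadd (mem_openSegment_sub_add x d))

theorem exists_ne_zero_dotProduct_eq_zero_abs_le {ι 𝕜 : Type*} [Fintype ι] [Field 𝕜]
    [LinearOrder 𝕜] [IsStrictOrderedRing 𝕜] (a : ι → 𝕜) {x : ι → 𝕜} (hx : 0 ≤ x) {i j : ι}
    (hij : i ≠ j) (hi : 0 < x i) (hj : 0 < x j) : ∃ c ≠ 0, a ⬝ᵥ c = 0 ∧ |c| ≤ x := by
  classical
  wlog haij : |a i| ≤ |a j| generalizing i j
  · exact this hij.symm hj hi (le_of_not_ge haij)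
  -- If `a j = 0` then also `a i = 0`, and the junk value `r = 0` is the right one.
  set r := a i / a j
  have hr : a j * r = a i := mul_div_cancel_of_imp' fun h ↦ by simpa [h] using haij
  have hr_le : |r| ≤ 1 := by
    rw [abs_div]
    exact div_le_one_of_le₀ haij (abs_nonneg _)
  set m := min (x i) (x j)
  have hm : 0 < m := lt_min hi hj
  refine ⟨Pi.single i m - Pi.single j (r * m), fun h ↦ ?_, ?_, fun k ↦ ?_⟩
  · simpa [hij, hm.ne'] using congrFun h i
  · rw [dotProduct_sub, dotProduct_single, dotProduct_single, ← mul_assoc, hr, sub_self]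
  · rcases eq_or_ne k i with rfl | hki
    · calc |(Pi.single k m - Pi.single j (r * m) : ι → 𝕜) k| = m := by simp [hij, abs_of_pos hm]
        _ ≤ x k := min_le_left _ _
    · rcases eq_or_ne k j with rfl | hkj
      · calc |(Pi.single i m - Pi.single k (r * m) : ι → 𝕜) k| = |r| * m := by
              simp [hki, abs_mul, abs_of_pos hm]
          _ ≤ m := mul_le_of_le_one_left hm.le hr_le
          _ ≤ x k := min_le_right _ _
      · simpa [hki, hkj] using hx k

namespace ECRWeights

variable {V A : Type}

/-- The weights `γ⁺ v, γ⁻ v, θ⁺ v, θ⁻ v` of the flow-balance inequalities at the node `v`, indexed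
by `Fin 4` in this order so that the four can be treated uniformly. -/
def nodeWeights (w : ECRWeights V A) (v : V) : Fin 4 → ℝ := ![γp w v, γm w v, θp w v, θm w v]

/-- The signs with which the four weights at a node, ordered as in `nodeWeights`, enter the
defining equations of `C^l`. -/
def nodeSign : Fin 4 → ℝ := ![1, -1, -1, 1]

/-- The direction in weight space that changes the weights at each node `v` by `c v`, ordered as in
`nodeWeights`, and leaves all arc weights unchanged. -/
def nodeShift : (V → Fin 4 → ℝ) →ₗ[ℝ] ECRWeights V A where
  toFun c := (fun v ↦ c v 0, fun v ↦ c v 1, fun v ↦ c v 2, fun v ↦ c v 3, 0, 0, 0, 0, 0, 0)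
  map_add' c c' := by ext <;> simp
  map_smul' r c := by ext <;> simp

theorem nodeWeights_add_nodeShift (w : ECRWeights V A) (c : V → Fin 4 → ℝ) (v : V) :
    nodeWeights (w + nodeShift c) v = nodeWeights w v + c v := by
  ext i
  fin_cases i <;> rfl

theorem nodeShift_injective : Function.Injective (nodeShift : _ → ECRWeights V A) := by
  intro c c' h
  ext v : 1
  have h_add := congrArg (fun d ↦ nodeWeights (0 + d) v) h
  simpa only [nodeWeights_add_nodeShift, add_right_inj] using h_add

theorem nodeSign_dotProduct_nodeWeights (w : ECRWeights V A) (v : V) :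
    nodeSign ⬝ᵥ nodeWeights w v = (γp w v - γm w v) - (θp w v - θm w v) := by
  simp only [nodeSign, nodeWeights, Matrix.cons_dotProduct_cons,
    Matrix.dotProduct_of_isEmpty]
  ring

end ECRWeights

section Cone

open ECRWeights

variable {V A : Type} [Fintype V] [DecidableEq A] {E : V → A → ℝ} {l : A} {s : ℝ}
  {w : ECRWeights V A}

theorem memCl.nodeWeights_nonneg (hw : memCl E l s w) (v : V) : 0 ≤ nodeWeights w v := by
  obtain ⟨hγp, hγm, hθp, hθm, -⟩ := hw
  intro i
  fin_cases i
  exacts [hγp v, hγm v, hθp v, hθm v]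

theorem memCl.add_nodeShift (hw : memCl E l s w) {c : V → Fin 4 → ℝ}
    (hc : ∀ v, nodeSign ⬝ᵥ c v = 0) (hnonneg : ∀ v, 0 ≤ nodeWeights w v + c v) :
    memCl E l s (w + nodeShift c) := by
  have hbalance (v : V) : nodeSign ⬝ᵥ nodeWeights (w + nodeShift c) v =
      nodeSign ⬝ᵥ nodeWeights w v := by
    rw [nodeWeights_add_nodeShift, dotProduct_add, hc, add_zero]
  obtain ⟨-, -, -, -, harc⟩ := hw
  refine ⟨fun v ↦ hnonneg v 0, fun v ↦ hnonneg v 1, fun v ↦ hnonneg v 2, fun v ↦ hnonneg v 3, ?_⟩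
  simp only [← nodeSign_dotProduct_nodeWeights, hbalance] at harc ⊢
  simpa [nodeShift, lam, mu, η, ρ, βp, βm] using harc

theorem eq_zero_of_mem_extremePoints_of_abs_le_nodeWeights
    (hw : w ∈ Set.extremePoints ℝ {w' : ECRWeights V A | memCl E l s w'}) {c : V → Fin 4 → ℝ}
    (hc : ∀ v, nodeSign ⬝ᵥ c v = 0) (hle : ∀ v, |c v| ≤ nodeWeights w v) : c = 0 := by
  have hadd : memCl E l s (w + nodeShift c) :=
    hw.1.add_nodeShift hc fun v ↦ neg_le_iff_add_nonneg.mp ((neg_le_abs _).trans (hle v))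
  have hsub : memCl E l s (w - nodeShift c) := by
    rw [sub_eq_add_neg, ← nodeShift.map_neg]
    refine hw.1.add_nodeShift (fun v ↦ ?_) fun v ↦ ?_
    · rw [Pi.neg_apply, dotProduct_neg, hc, neg_zero]
    · rw [Pi.neg_apply, ← sub_eq_add_neg]
      exact sub_nonneg.mpr ((le_abs_self _).trans (hle v))
  have hshift : nodeShift c = (0 : ECRWeights V A) :=
    eq_zero_of_mem_extremePoints_of_sub_mem_of_add_mem hw hsub hadd
  exact nodeShift_injective (hshift.trans nodeShift.map_zero.symm)

theorem eq_of_mem_extremePoints_of_nodeWeights_pos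
    (hw : w ∈ Set.extremePoints ℝ {w' : ECRWeights V A | memCl E l s w'}) {v : V} {i j : Fin 4}
    (hi : 0 < nodeWeights w v i) (hj : 0 < nodeWeights w v j) : i = j := by
  classical
  by_contra hij
  have hnonneg := hw.1.nodeWeights_nonneg
  obtain ⟨c, hc_ne, hc, hle⟩ :=
    exists_ne_zero_dotProduct_eq_zero_abs_le nodeSign (hnonneg v) hij hi hj
  have hsingle : (Pi.single v c : V → Fin 4 → ℝ) = 0 := by
    apply eq_zero_of_mem_extremePoints_of_abs_le_nodeWeights hw <;> intro u <;>
      rcases eq_or_ne u v with rfl | huv <;> simp [*]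
  exact hc_ne (Pi.single_eq_zero_iff.mp hsingle)

end Cone

open ECRWeights in
theorem extremePoint_mem_Cl_at_most_one_flow_balance_weight_general
    {V A : Type} [Fintype V] [DecidableEq A] (E : V → A → ℝ) (l : A) (s : ℝ)
    (w : ECRWeights V A)
    (hw : w ∈ Set.extremePoints ℝ {w' : ECRWeights V A | memCl E l s w'}) :
    ∀ v, ¬(0 < γp w v ∧ 0 < γm w v) ∧ ¬(0 < γp w v ∧ 0 < θp w v) ∧
      ¬(0 < γp w v ∧ 0 < θm w v) ∧ ¬(0 < γm w v ∧ 0 < θp w v) ∧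
      ¬(0 < γm w v ∧ 0 < θm w v) ∧ ¬(0 < θp w v ∧ 0 < θm w v) := by
  intro v
  have not_both {i j : Fin 4} (hij : i ≠ j) : ¬(0 < nodeWeights w v i ∧ 0 < nodeWeights w v j) :=
    fun h ↦ hij (eq_of_mem_extremePoints_of_nodeWeights_pos hw h.1 h.2)
  exact ⟨not_both (i := 0) (j := 1) (by decide), not_both (i := 0) (j := 2) (by decide),
    not_both (i := 0) (j := 3) (by decide), not_both (i := 1) (j := 2) (by decide),
    not_both (i := 1) (j := 3) (by decide), not_both (i := 2) (j := 3) (by decide)⟩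

open ECRWeights in
/-- At every extreme point of `C^l` (the `m = 1` cone over a network polytope), for each node
`v` at most one of `γ⁺ v`, `γ⁻ v`, `θ⁺ v`, `θ⁻ v` is positive: a node's positive and negative
flow-balance inequalities cannot both receive positive aggregation weight, nor can the same
flow-balance inequality receive positive weight both with multiplier `y₁` and with
multiplier `1 - y₁`. -/
theorem extremePoint_mem_Cl_at_most_one_flow_balance_weight
    {V A : Type} [Fintype V] [Fintype A] [DecidableEq V] [DecidableEq A]
    (t h : A → V) (hloop : ∀ a, t a ≠ h a)
    (E : V → A → ℝ)
    (hE : ∀ v a, E v a = (if t a = v then (1 : ℝ) else 0) - (if h a = v then 1 else 0))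
    (l : A) (s : ℝ) (hs : s = 1 ∨ s = -1)
    (w : ECRWeights V A)
    (hw : w ∈ Set.extremePoints ℝ {w' : ECRWeights V A | memCl E l s w'}) :
    ∀ v, ¬(0 < γp w v ∧ 0 < γm w v) ∧ ¬(0 < γp w v ∧ 0 < θp w v) ∧
      ¬(0 < γp w v ∧ 0 < θm w v) ∧ ¬(0 < γm w v ∧ 0 < θp w v) ∧
      ¬(0 < γm w v ∧ 0 < θm w v) ∧ ¬(0 < θp w v ∧ 0 < θm w v) :=
  extremePoint_mem_Cl_at_most_one_flow_balance_weight_general E l s w hw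
end

section
/- Let π̄ be an extreme point of C^l (the m = 1 cone over a network polytope) and let Ĩ = {v ∈ V : γ⁺(v) > 0 or γ⁻(v) > 0 or θ⁺(v) > 0 or θ⁻(v) > 0} be the set of nodes whose flow-balance constraints carry positive aggregation weight. If Ĩ ≠ ∅, then Ĩ induces a connected subgraph of the underlying undirected graph of G (i.e., Ĩ is the node set of a tree of the undirected version of G), and the arc l is incident to at least one node of Ĩ. -/
/-!
An extreme point `w` of a polyhedron `{w ≥ 0, f w = b}` admits no nonzero `d` with `0 ≤ d ≤ w` and
`f d = 0`, because `w ± d` both stay in the polyhedron. Let `K` be a set of nodes that no arc joins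
to the rest of the support `Ĩ`. Restricting `w` to `K` and the arcs incident to `K` keeps the
balance equations of these arcs and makes all others read `0 = 0`; so if `l` is not incident to `K`
the restriction is such a `d`, and `K` misses `Ĩ`. Hence every connected component of `Ĩ` contains
an end of `l`, and `l` joins these components to one another.
-/

section ExtremePoints

variable {𝕜 M N : Type*} [Ring 𝕜] [LinearOrder 𝕜] [IsStrictOrderedRing 𝕜] [Invertible (2 : 𝕜)]
  [AddCommGroup M] [Module 𝕜 M] {x d : M}

theorem eq_zero_of_add_mem_of_sub_mem_of_mem_extremePoints_s4 {S : Set M}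
    (hx : x ∈ Set.extremePoints 𝕜 S) (hadd : x + d ∈ S) (hsub : x - d ∈ S) : d = 0 :=
  add_eq_left.mp (hx.2 hadd hsub (mem_openSegment_add_sub x d))

theorem eq_zero_of_le_of_mem_extremePoints_nonneg_fiber [PartialOrder M] [IsOrderedAddMonoid M]
    [AddGroup N] {f : M →+ N} {b : N} (hx : x ∈ Set.extremePoints 𝕜 {y | 0 ≤ y ∧ f y = b})
    (hd : 0 ≤ d) (hdx : d ≤ x) (hfd : f d = 0) : d = 0 := by
  obtain ⟨hx0, hfx⟩ := hx.1
  exact eq_zero_of_add_mem_of_sub_mem_of_mem_extremePoints_s4 hx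
    ⟨add_nonneg hx0 hd, by rw [map_add, hfx, hfd, add_zero]⟩
    ⟨sub_nonneg.mpr hdx, by rw [map_sub, hfx, hfd, sub_zero]⟩

end ExtremePoints

theorem incidence_ne_zero_iff {V A R : Type*} [DecidableEq V] [Ring R] [Nontrivial R] {t h : A → V}
    (hloop : ∀ a, t a ≠ h a) {E : V → A → R}
    (hE : ∀ v a, E v a = (if t a = v then 1 else 0) - (if h a = v then 1 else 0)) {v : V} {a : A} :
    E v a ≠ 0 ↔ t a = v ∨ h a = v := by
  rw [hE]
  by_cases ht : t a = v <;> by_cases hh : h a = v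
  · exact absurd (ht.trans hh.symm) (hloop a)
  all_goals simp [ht, hh]

namespace ECRWeights

variable {V A : Type} {w : ECRWeights V A} {K : Set V} {B : Set A} {v : V}

theorem nonneg_iff : 0 ≤ w ↔ 0 ≤ γp w ∧ 0 ≤ γm w ∧ 0 ≤ θp w ∧ 0 ≤ θm w ∧
    0 ≤ lam w ∧ 0 ≤ mu w ∧ 0 ≤ η w ∧ 0 ≤ ρ w ∧ 0 ≤ βp w ∧ 0 ≤ βm w :=
  Iff.rfl

/-- The net weight `(γ⁺ - γ⁻) - (θ⁺ - θ⁻)` on the flow-balance constraint of each node; the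
balance equations of `C^l` see the node weights only through it. -/
def netNodeWeight (w : ECRWeights V A) (v : V) : ℝ := (γp w v - γm w v) - (θp w v - θm w v)

/-- The set `Ĩ` of nodes whose flow-balance constraints carry positive aggregation weight. -/
def nodeSupport (w : ECRWeights V A) : Set V :=
  {v | 0 < γp w v ∨ 0 < γm w v ∨ 0 < θp w v ∨ 0 < θm w v}

theorem netNodeWeight_add (w w' : ECRWeights V A) :
    netNodeWeight (w + w') = netNodeWeight w + netNodeWeight w' := by
  ext v
  simp only [netNodeWeight, γp, γm, θp, θm, Prod.fst_add, Prod.snd_add, Pi.add_apply]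
  ring

theorem nodeSupport_zero : nodeSupport (0 : ECRWeights V A) = ∅ := by
  simp [nodeSupport, γp, γm, θp, θm]

theorem mem_nodeSupport_of_netNodeWeight_ne_zero (hw : 0 ≤ w) (hv : netNodeWeight w v ≠ 0) :
    v ∈ nodeSupport w := by
  obtain ⟨hγp, hγm, hθp, hθm, -⟩ := nonneg_iff.mp hw
  contrapose! hv
  simp only [nodeSupport, Set.mem_ofPred_eq, not_or, not_lt] at hv
  simp [netNodeWeight, hv.1.antisymm (hγp v), hv.2.1.antisymm (hγm v),
    hv.2.2.1.antisymm (hθp v), hv.2.2.2.antisymm (hθm v)]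

/-- The weights `w` kept on the nodes of `K` and the arcs of `B`, and zero elsewhere. -/
noncomputable def restrict (K : Set V) (B : Set A) (w : ECRWeights V A) : ECRWeights V A :=
  (K.indicator (γp w), K.indicator (γm w), K.indicator (θp w), K.indicator (θm w),
    B.indicator (lam w), B.indicator (mu w), B.indicator (η w), B.indicator (ρ w),
    B.indicator (βp w), B.indicator (βm w))

theorem restrict_nonneg (hw : 0 ≤ w) : 0 ≤ restrict K B w := by
  have indicator_nonneg {ι : Type} (s : Set ι) {f : ι → ℝ} (hf : 0 ≤ f) : 0 ≤ s.indicator f :=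
    Set.indicator_nonneg fun i _ => hf i
  obtain ⟨hγp, hγm, hθp, hθm, hlam, hmu, hη, hρ, hβp, hβm⟩ := nonneg_iff.mp hw
  exact ⟨indicator_nonneg K hγp, indicator_nonneg K hγm, indicator_nonneg K hθp,
    indicator_nonneg K hθm, indicator_nonneg B hlam, indicator_nonneg B hmu,
    indicator_nonneg B hη, indicator_nonneg B hρ, indicator_nonneg B hβp,
    indicator_nonneg B hβm⟩

theorem restrict_le_self (hw : 0 ≤ w) : restrict K B w ≤ w := by
  have indicator_le_self {ι : Type} (s : Set ι) {f : ι → ℝ} (hf : 0 ≤ f) : s.indicator f ≤ f :=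
    Set.indicator_le_self' fun i _ => hf i
  obtain ⟨hγp, hγm, hθp, hθm, hlam, hmu, hη, hρ, hβp, hβm⟩ := nonneg_iff.mp hw
  exact ⟨indicator_le_self K hγp, indicator_le_self K hγm, indicator_le_self K hθp,
    indicator_le_self K hθm, indicator_le_self B hlam, indicator_le_self B hmu,
    indicator_le_self B hη, indicator_le_self B hρ, indicator_le_self B hβp,
    indicator_le_self B hβm⟩

theorem netNodeWeight_restrict :
    netNodeWeight (restrict K B w) = K.indicator (netNodeWeight w) := by
  ext v
  by_cases hv : v ∈ K <;> simp [netNodeWeight, restrict, γp, γm, θp, θm, hv]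

theorem nodeSupport_restrict : nodeSupport (restrict K B w) = nodeSupport w ∩ K := by
  ext v
  by_cases hv : v ∈ K <;> simp [nodeSupport, restrict, γp, γm, θp, θm, hv]

section Constraints

variable [Fintype V] {E : V → A → ℝ} {l : A} {s : ℝ}

/-- The left-hand side of the balance equations of `C^l`, for an arbitrary matrix `E` in place
of a node-arc incidence matrix. -/
def balance (E : V → A → ℝ) : ECRWeights V A →+ (A → ℝ) where
  toFun w a := ∑ v, E v a * netNodeWeight w v
    + η w a - ρ w a - lam w a + mu w a + βp w a - βm w a
  map_zero' := by
    ext a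
    simp [netNodeWeight, γp, γm, θp, θm, η, ρ, lam, mu, βp, βm]
  map_add' w w' := by
    ext a
    simp only [netNodeWeight_add, mul_add, Finset.sum_add_distrib, η, ρ, lam, mu, βp, βm,
      Prod.fst_add, Prod.snd_add, Pi.add_apply]
    ring

theorem balance_apply (w : ECRWeights V A) (a : A) :
    balance E w a = ∑ v, E v a * netNodeWeight w v
      + η w a - ρ w a - lam w a + mu w a + βp w a - βm w a :=
  rfl

/-- The map whose fibers cut `C^l` out of the nonnegative orthant: the balance equations together
with the normalization `β⁺(l) = β⁻(l) = 0`. -/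
def constraintMap (E : V → A → ℝ) (l : A) : ECRWeights V A →+ (A → ℝ) × ℝ × ℝ where
  toFun w := (balance E w, βp w l, βm w l)
  map_zero' := by rw [map_zero]; rfl
  map_add' w w' := by rw [map_add]; rfl

theorem constraintMap_eq_iff {b : A → ℝ} {p q : ℝ} :
    constraintMap E l w = (b, p, q) ↔ balance E w = b ∧ βp w l = p ∧ βm w l = q := by
  simp [constraintMap]

theorem setOf_memCl_eq_nonneg_fiber [DecidableEq A] (E : V → A → ℝ) (l : A) (s : ℝ) :
    {w : ECRWeights V A | memCl E l s w} =
      {w | 0 ≤ w ∧ constraintMap E l w = (Pi.single l s, 0, 0)} := by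
  ext w
  have hbalance : balance E w = Pi.single l s ↔
      ∀ a, balance E w a = s * (if a = l then 1 else 0) := by
    simp [funext_iff, Pi.single_apply]
  rw [Set.mem_ofPred_eq, Set.mem_ofPred_eq, nonneg_iff, constraintMap_eq_iff, hbalance]
  simp only [memCl, Pi.le_def, Pi.zero_apply, balance_apply, netNodeWeight]
  tauto

theorem balance_restrict (hKB : ∀ v a, E v a ≠ 0 → netNodeWeight w v ≠ 0 → (v ∈ K ↔ a ∈ B)) :
    balance E (restrict K B w) = B.indicator (balance E w) := by
  have hterm (v : V) (a : A) : E v a * K.indicator (netNodeWeight w) v =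
      B.indicator (fun a => E v a * netNodeWeight w v) a := by
    classical
    simp only [Set.indicator_apply]
    by_cases hE : E v a = 0
    · simp [hE]
    by_cases hnet : netNodeWeight w v = 0
    · simp [hnet]
    · simp [hKB v a hE hnet]
  ext a
  rw [balance_apply, netNodeWeight_restrict, Finset.sum_congr rfl fun v _ => hterm v a]
  by_cases ha : a ∈ B <;> simp [restrict, η, ρ, lam, mu, βp, βm, balance_apply, ha]

theorem constraintMap_restrict_eq_zero [DecidableEq A]
    (hw : constraintMap E l w = (Pi.single l s, 0, 0)) (hl : l ∉ B)
    (hKB : ∀ v a, E v a ≠ 0 → netNodeWeight w v ≠ 0 → (v ∈ K ↔ a ∈ B)) :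
    constraintMap E l (restrict K B w) = 0 := by
  refine constraintMap_eq_iff.mpr ⟨?_, Set.indicator_of_notMem hl _, Set.indicator_of_notMem hl _⟩
  rw [balance_restrict hKB, (constraintMap_eq_iff.mp hw).1]
  ext a
  rcases eq_or_ne a l with rfl | ha
  · exact Set.indicator_of_notMem hl _
  · simp [ha]

/-- Adjacency in the graph induced on `I`, where two nodes are adjacent when some column of `E` is
nonzero at both; for the incidence matrix of a loopless graph this is adjacency in the underlying
undirected graph. -/
def InducedAdj (E : V → A → ℝ) (I : Set V) (x y : V) : Prop :=
  x ∈ I ∧ y ∈ I ∧ x ≠ y ∧ ∃ a, E x a ≠ 0 ∧ E y a ≠ 0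

instance (E : V → A → ℝ) (I : Set V) : Std.Symm (InducedAdj E I) where
  symm := fun _ _ ⟨hx, hy, hxy, a, hxa, hya⟩ => ⟨hy, hx, hxy.symm, a, hya, hxa⟩

variable [DecidableEq A]

theorem exists_mem_ne_zero_of_closed
    (hw : w ∈ Set.extremePoints ℝ {w' : ECRWeights V A | memCl E l s w'})
    (hmeet : (nodeSupport w ∩ K).Nonempty)
    (hclosed : ∀ x ∈ K, ∀ y ∈ nodeSupport w, ∀ a, E x a ≠ 0 → E y a ≠ 0 → y ∈ K) :
    ∃ v ∈ K, E v l ≠ 0 := by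
  by_contra hlB
  rw [setOf_memCl_eq_nonneg_fiber] at hw
  obtain ⟨hw0, hconstraint⟩ := hw.1
  let B : Set A := {a | ∃ v ∈ K, E v a ≠ 0}
  have hKB (v : V) (a : A) (hE : E v a ≠ 0) (hnet : netNodeWeight w v ≠ 0) : v ∈ K ↔ a ∈ B :=
    ⟨fun hv => ⟨v, hv, hE⟩, fun ⟨x, hx, hxa⟩ =>
      hclosed x hx v (mem_nodeSupport_of_netNodeWeight_ne_zero hw0 hnet) a hxa hE⟩
  have hrestrict : restrict K B w = 0 :=
    eq_zero_of_le_of_mem_extremePoints_nonneg_fiber hw (restrict_nonneg hw0)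
      (restrict_le_self hw0) (constraintMap_restrict_eq_zero hconstraint hlB hKB)
  rw [← nodeSupport_restrict (B := B), hrestrict, nodeSupport_zero] at hmeet
  exact Set.not_nonempty_empty hmeet

theorem exists_reachable_ne_zero
    (hw : w ∈ Set.extremePoints ℝ {w' : ECRWeights V A | memCl E l s w'})
    {u : V} (hu : u ∈ nodeSupport w) :
    ∃ v ∈ nodeSupport w, E v l ≠ 0 ∧
      Relation.ReflTransGen (InducedAdj E (nodeSupport w)) u v := by
  let K : Set V := {v ∈ nodeSupport w | Relation.ReflTransGen (InducedAdj E (nodeSupport w)) u v}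
  have hclosed : ∀ x ∈ K, ∀ y ∈ nodeSupport w, ∀ a, E x a ≠ 0 → E y a ≠ 0 → y ∈ K := by
    rintro x ⟨hx, hux⟩ y hy a hxa hya
    rcases eq_or_ne x y with rfl | hxy
    · exact ⟨hx, hux⟩
    · exact ⟨hy, hux.tail ⟨hx, hy, hxy, a, hxa, hya⟩⟩
  have hmeet : (nodeSupport w ∩ K).Nonempty := ⟨u, hu, hu, .refl⟩
  obtain ⟨v, ⟨hv, huv⟩, hvl⟩ := exists_mem_ne_zero_of_closed hw hmeet hclosed
  exact ⟨v, hv, hvl, huv⟩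

end Constraints

end ECRWeights

open ECRWeights in
theorem extremePoint_mem_Cl_support_is_tree_general {V A : Type} [Fintype V] [DecidableEq A]
    {E : V → A → ℝ} {l : A} {s : ℝ} {w : ECRWeights V A}
    (hw : w ∈ Set.extremePoints ℝ {w' : ECRWeights V A | memCl E l s w'})
    (hne : (nodeSupport w).Nonempty) :
    (∀ u ∈ nodeSupport w, ∀ v ∈ nodeSupport w,
      Relation.ReflTransGen (InducedAdj E (nodeSupport w)) u v) ∧
    ∃ v ∈ nodeSupport w, E v l ≠ 0 := by
  refine ⟨fun u hu v hv => ?_, ?_⟩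
  · obtain ⟨u', hu', hul, huu'⟩ := exists_reachable_ne_zero hw hu
    obtain ⟨v', hv', hvl, hvv'⟩ := exists_reachable_ne_zero hw hv
    have hlink : Relation.ReflTransGen (InducedAdj E (nodeSupport w)) u' v' := by
      rcases eq_or_ne u' v' with rfl | hne'
      · exact .refl
      · exact .single ⟨hu', hv', hne', l, hul, hvl⟩
    exact (huu'.trans hlink).trans (symm hvv')
  · obtain ⟨u, hu⟩ := hne
    obtain ⟨v, hv, hvl, -⟩ := exists_reachable_ne_zero hw hu
    exact ⟨v, hv, hvl⟩

open ECRWeights in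
/-- At an extreme point of `C^l` (the `m = 1` cone over a network polytope), the set `Ĩ` of
nodes whose flow-balance constraints carry positive aggregation weight, if nonempty, induces
a connected subgraph of the underlying undirected graph of `G` (i.e. it is the node set of a
tree of the undirected version of `G`), and the arc `l` is incident to at least one node
of `Ĩ`. -/
theorem extremePoint_mem_Cl_support_is_tree
    {V A : Type} [Fintype V] [Fintype A] [DecidableEq V] [DecidableEq A]
    (t h : A → V) (hloop : ∀ a, t a ≠ h a)
    (E : V → A → ℝ)
    (hE : ∀ v a, E v a = (if t a = v then (1 : ℝ) else 0) - (if h a = v then 1 else 0))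
    (l : A) (s : ℝ) (hs : s = 1 ∨ s = -1)
    (w : ECRWeights V A)
    (hw : w ∈ Set.extremePoints ℝ {w' : ECRWeights V A | memCl E l s w'})
    (I : Set V)
    (hI : I = {v | 0 < γp w v ∨ 0 < γm w v ∨ 0 < θp w v ∨ 0 < θm w v})
    (hne : I.Nonempty) :
    (∀ u ∈ I, ∀ v ∈ I, Relation.ReflTransGen
      (fun x y => x ∈ I ∧ y ∈ I ∧ x ≠ y ∧
        ∃ a, (t a = x ∨ h a = x) ∧ (t a = y ∨ h a = y)) u v) ∧
    (t l ∈ I ∨ h l ∈ I) := by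
  subst hI
  obtain ⟨hconn, v, hv, hvl⟩ := extremePoint_mem_Cl_support_is_tree_general hw hne
  unfold InducedAdj at hconn
  simp only [incidence_ne_zero_iff hloop hE] at hconn hvl
  rcases hvl with rfl | rfl
  exacts [⟨hconn, Or.inl hv⟩, ⟨hconn, Or.inr hv⟩]
end

section
/- Let Ĩ ⊆ V be nonempty and induce a connected subgraph of the underlying undirected graph of G, and let l ∈ A be an arc exactly one of whose endpoints lies in Ĩ. Put ε = 1 if h(l) ∈ Ĩ and ε = −1 if t(l) ∈ Ĩ, and define c : A → ℝ by c(a) = (1 if a = l else 0) + ε·Σ_{v ∈ Ĩ} E(v,a). Then: (C1) the number of arcs a ∈ A such that c(a) = 0 and either a = l or a is incident to a node of Ĩ is at least |Ĩ|; and (C2) c(l) = 0 and every node v ∈ Ĩ is incident to at least one arc a with c(a) = 0. (Here c(a) is the net coefficient of the bilinear term y₁·x_a when the flow-balance constraints of the nodes of Ĩ, each with aggregation weight 1 and multiplier y₁ or 1 − y₁ according to any partition of Ĩ, are aggregated with the base bilinear equality for arc l; (C1) and (C2) are exactly the EC&R cancellation conditions, so any such tree, partition and class sign yields an EC&R assignment.)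 -/
/-!
Summing the incidence values over `I` cancels every arc with both ends in `I`, and the sign `ε`
makes the sum at `l` cancel the base term. The arcs inside `I` carry every edge of the connected
graph induced on `I`, so there are at least `|I| - 1` of them; `l` is one more, because it crosses
the boundary of `I`. For (C2), a node of `I` is incident to an arc inside `I` unless it is the only
node of `I`, in which case it is an endpoint of `l`.
-/

section UnderlyingGraph

variable {V A : Type*} {t h : A → V}

/-- The underlying simple undirected graph of the directed graph with tail map `t` and head map
`h`, in which parallel and opposite arcs are identified and loops are discarded. -/
def underlyingGraph (t h : A → V) : SimpleGraph V :=
  SimpleGraph.fromEdgeSet (Set.range fun a => s(t a, h a))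

theorem underlyingGraph_adj {x y : V} :
    (underlyingGraph t h).Adj x y ↔
      x ≠ y ∧ ∃ a, (t a = x ∨ h a = x) ∧ (t a = y ∨ h a = y) := by
  simp only [underlyingGraph, SimpleGraph.fromEdgeSet_adj, Set.mem_range, Sym2.eq_iff]
  grind

theorem card_le_card_arcs_add_one_of_connected [Finite V]
    (hconn : (underlyingGraph t h).Connected) : ENat.card V ≤ ENat.card A + 1 := by
  obtain _ | _ := finite_or_infinite A
  · have hedges : (underlyingGraph t h).edgeSet ⊆ Set.range fun a => s(t a, h a) := by
      simp [underlyingGraph]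
    have hcard : Nat.card V ≤ Nat.card A + 1 := calc
      Nat.card V ≤ Nat.card (underlyingGraph t h).edgeSet + 1 :=
        hconn.card_vert_le_card_edgeSet_add_one
      _ ≤ Nat.card (Set.range fun a => s(t a, h a)) + 1 := by
        gcongr
        exact Nat.card_mono (Set.finite_range _) hedges
      _ ≤ Nat.card A + 1 := by
        gcongr
        exact Finite.card_range_le _
    simpa only [ENat.card_eq_coe_natCard] using mod_cast hcard
  · simp

theorem exists_arc_incident_of_preconnected [Nontrivial V]
    (hconn : (underlyingGraph t h).Preconnected) (v : V) : ∃ a, t a = v ∨ h a = v := by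
  obtain ⟨_, hadj⟩ := hconn.exists_adj_of_nontrivial v
  obtain ⟨-, a, hav, -⟩ := underlyingGraph_adj.mp hadj
  exact ⟨a, hav⟩

/-- The set of arcs with both endpoints in `s`, i.e. the arcs of the directed subgraph induced
by `s`. -/
def arcsWithin (t h : A → V) (s : Set V) : Set A :=
  {a | t a ∈ s ∧ h a ∈ s}

theorem induce_underlyingGraph (t h : A → V) (s : Set V) :
    (underlyingGraph t h).induce s =
      underlyingGraph (fun a : arcsWithin t h s => (⟨t a, a.2.1⟩ : s)) fun a => ⟨h a, a.2.2⟩ := by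
  ext x y
  simp only [SimpleGraph.induce_adj, underlyingGraph, SimpleGraph.fromEdgeSet_adj, Set.mem_range,
    Sym2.eq_iff, Subtype.ext_iff, Subtype.exists, arcsWithin, ne_eq]
  grind

theorem encard_le_encard_arcsWithin_add_one {s : Set V} (hs : s.Finite)
    (hconn : ((underlyingGraph t h).induce s).Connected) :
    s.encard ≤ (arcsWithin t h s).encard + 1 := by
  have := hs.to_subtype
  rw [induce_underlyingGraph] at hconn
  exact card_le_card_arcs_add_one_of_connected hconn

theorem exists_mem_arcsWithin_incident {s : Set V} (hs : s.Nontrivial)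
    (hconn : ((underlyingGraph t h).induce s).Preconnected) {v : V} (hv : v ∈ s) :
    ∃ a ∈ arcsWithin t h s, t a = v ∨ h a = v := by
  have := hs.coe_sort
  rw [induce_underlyingGraph] at hconn
  obtain ⟨a, ha⟩ := exists_arc_incident_of_preconnected hconn ⟨v, hv⟩
  exact ⟨a, a.2, by simpa only [Subtype.ext_iff] using ha⟩

theorem connected_induce_of_reflTransGen {G : SimpleGraph V} {s : Set V} (hs : s.Nonempty)
    (hconn : ∀ u ∈ s, ∀ v ∈ s,
      Relation.ReflTransGen (fun x y => x ∈ s ∧ y ∈ s ∧ G.Adj x y) u v) :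
    (G.induce s).Connected := by
  have := hs.to_subtype
  refine SimpleGraph.Connected.mk fun u v => ?_
  suffices ∀ w, Relation.ReflTransGen (fun x y => x ∈ s ∧ y ∈ s ∧ G.Adj x y) u w →
      ∀ hw : w ∈ s, (G.induce s).Reachable u ⟨w, hw⟩ from this v (hconn u u.2 v v.2) v.2
  intro w huw
  induction huw with
  | refl => exact fun _ => .rfl
  | tail _ hxy ih =>
    obtain ⟨hx, _, hadj⟩ := hxy
    exact fun _ => (ih hx).trans (SimpleGraph.induce_adj.mpr hadj).reachable

end UnderlyingGraph

section NetCoefficient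

variable {V A : Type*} [DecidableEq V] (R : Type*) [Ring R] (t h : A → V)

/-- The entry of the node-arc incidence matrix: `1` at the tail of `a`, `-1` at its head, and
`0` if `a` is a loop. -/
def incidence (v : V) (a : A) : R :=
  (if t a = v then 1 else 0) - (if h a = v then 1 else 0)

theorem sum_incidence (I : Finset V) (a : A) :
    ∑ v ∈ I, incidence R t h v a = (if t a ∈ I then 1 else 0) - (if h a ∈ I then 1 else 0) := by
  simp only [incidence, Finset.sum_sub_distrib, Finset.sum_ite_eq]

variable [DecidableEq A]

/-- The coefficient of `y₁ x_a` once the flow-balance constraints of the nodes in `I` are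
aggregated with the base bilinear equality of the arc `l`. The sign of the aggregation is `1`
if `l` enters `I` and `-1` if it leaves `I`. -/
def netCoeff (I : Finset V) (l a : A) : R :=
  (if a = l then 1 else 0) + (if h l ∈ I then 1 else -1) * ∑ v ∈ I, incidence R t h v a

variable {t h} {I : Finset V} {l : A}

theorem netCoeff_self (hl : (t l ∈ I ∧ h l ∉ I) ∨ (t l ∉ I ∧ h l ∈ I)) :
    netCoeff R t h I l l = 0 := by
  rw [netCoeff, sum_incidence]
  rcases hl with ⟨ht, hh⟩ | ⟨ht, hh⟩ <;> simp [ht, hh]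

theorem netCoeff_eq_zero_of_mem_arcsWithin (hl : l ∉ arcsWithin t h I) {a : A}
    (ha : a ∈ arcsWithin t h I) : netCoeff R t h I l a = 0 := by
  have hal : a ≠ l := ne_of_mem_of_not_mem ha hl
  obtain ⟨ht, hh⟩ := ha
  rw [Finset.mem_coe] at ht hh
  simp [netCoeff, sum_incidence, ht, hh, hal]

theorem tree_gives_ECR_assignment_general
    (hconn : ((underlyingGraph t h).induce (I : Set V)).Connected)
    (hl : (t l ∈ I ∧ h l ∉ I) ∨ (t l ∉ I ∧ h l ∈ I)) :
    I.card ≤ {a | netCoeff R t h I l a = 0 ∧ (a = l ∨ t a ∈ I ∨ h a ∈ I)}.encard ∧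
      netCoeff R t h I l l = 0 ∧
      ∀ v ∈ I, ∃ a, netCoeff R t h I l a = 0 ∧ (t a = v ∨ h a = v) := by
  have hl_self : netCoeff R t h I l l = 0 := netCoeff_self R hl
  have hl_crosses : l ∉ arcsWithin t h I := fun hlI => by
    rcases hl with ⟨-, hh⟩ | ⟨ht, -⟩
    exacts [hh hlI.2, ht hlI.1]
  have hcancel : insert l (arcsWithin t h I) ⊆
      {a | netCoeff R t h I l a = 0 ∧ (a = l ∨ t a ∈ I ∨ h a ∈ I)} := by
    rintro a (rfl | ha)
    · exact ⟨hl_self, .inl rfl⟩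
    · exact ⟨netCoeff_eq_zero_of_mem_arcsWithin R hl_crosses ha, .inr (.inl ha.1)⟩
  refine ⟨?_, hl_self, fun v hv => ?_⟩
  · calc (I.card : ℕ∞) = (I : Set V).encard := (Set.encard_coe_eq_coe_finsetCard I).symm
      _ ≤ (arcsWithin t h I).encard + 1 :=
        encard_le_encard_arcsWithin_add_one I.finite_toSet hconn
      _ = (insert l (arcsWithin t h I)).encard := (Set.encard_insert_of_notMem hl_crosses).symm
      _ ≤ _ := Set.encard_le_encard hcancel
  · rcases (I : Set V).subsingleton_or_nontrivial with hsub | hnontriv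
    · exact ⟨l, hl_self, hl.imp (fun hl => hsub hl.1 hv) fun hl => hsub hl.2 hv⟩
    · obtain ⟨a, ha, hav⟩ := exists_mem_arcsWithin_incident hnontriv hconn.preconnected hv
      exact ⟨a, netCoeff_eq_zero_of_mem_arcsWithin R hl_crosses ha, hav⟩

end NetCoefficient

/-- Let `Ĩ ⊆ V` be nonempty and induce a connected subgraph of the underlying undirected
graph of `G`, and let `l` be an arc exactly one of whose endpoints lies in `Ĩ`.  With
`ε = 1` if `h l ∈ Ĩ` and `ε = -1` if `t l ∈ Ĩ`, and
`c a = [a = l] + ε·Σ_{v ∈ Ĩ} E (v, a)` the net coefficient of the bilinear term `y₁·x_a` in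
the EC&R aggregation, we have:
(C1) the number of arcs `a` with `c a = 0` that are equal to `l` or incident to a node of `Ĩ`
is at least `|Ĩ|`; and
(C2) `c l = 0` and every node of `Ĩ` is incident to some arc `a` with `c a = 0`.
Hence any such tree, partition and class sign yields an EC&R assignment. -/
theorem tree_gives_ECR_assignment
    {V A : Type} [Fintype V] [Fintype A] [DecidableEq V] [DecidableEq A]
    (t h : A → V) (hloop : ∀ a, t a ≠ h a)
    (E : V → A → ℝ)
    (hE : ∀ v a, E v a = (if t a = v then (1 : ℝ) else 0) - (if h a = v then 1 else 0))
    (I : Finset V) (hne : I.Nonempty)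
    (hconn : ∀ u ∈ I, ∀ v ∈ I, Relation.ReflTransGen
      (fun x y => x ∈ I ∧ y ∈ I ∧ x ≠ y ∧
        ∃ a, (t a = x ∨ h a = x) ∧ (t a = y ∨ h a = y)) u v)
    (l : A) (hl : (t l ∈ I ∧ h l ∉ I) ∨ (t l ∉ I ∧ h l ∈ I))
    (ε : ℝ) (hε : ε = if h l ∈ I then (1 : ℝ) else -1)
    (c : A → ℝ) (hc : ∀ a, c a = (if a = l then (1 : ℝ) else 0) + ε * ∑ v ∈ I, E v a) :
    (I.card ≤ Set.ncard {a : A | c a = 0 ∧ (a = l ∨ t a ∈ I ∨ h a ∈ I)}) ∧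
    c l = 0 ∧ (∀ v ∈ I, ∃ a, c a = 0 ∧ (t a = v ∨ h a = v)) := by
  obtain rfl : c = netCoeff ℝ t h I l := funext fun a => by
    simp only [hc, hε, hE, netCoeff, incidence]
  have hconnected : ((underlyingGraph t h).induce (I : Set V)).Connected :=
    connected_induce_of_reflTransGen hne <| by
      simpa only [Finset.mem_coe, underlyingGraph_adj] using hconn
  rw [← Nat.cast_le (α := ℕ∞), (Set.toFinite _).cast_ncard_eq]
  exact tree_gives_ECR_assignment_general ℝ hconnected hl
end

section
/- Let M be a finite real matrix all of whose entries lie in {0, 1, −1}, let r₀ be a row index, s ∈ {1, −1}, and let x̄ be an extreme point of the polyhedron {x : x ≥ 0, M·x = s·e_{r₀}}, where e_{r₀} is the standard unit vector of row r₀. Say that a column c covers a row r if M(r,c) ≠ 0 and x̄_c > 0. If every row of M is covered by at most two columns and the row r₀ is covered by at most one column, then every coordinate of x̄ lies in {0,1}. -/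
/-! Write the system as `M x = b`; in the theorem `b = s • e_{r₀}`. Let `S` be the set of columns
`c` at which `x c` is none of the values `|b r|`. In a row with `b r ≠ 0` the single covering column
carries the value `|b r|`, so it is not in `S`. In a row with `b r = 0` covered by two columns, the
two terms cancel, so both columns carry the same value and `S` contains both or neither. Hence `M`
kills the restriction of `x` to `S`; as `x` can be moved along this restriction in both directions
within the polyhedron, extremality forces it to vanish. -/

open Matrix

/-- The polyhedron `{x : x ≥ 0, M x = b}` of nonnegative solutions of a linear system, in the
standard form of linear programming. -/
def nonnegSolutions {𝕜 R C : Type*} [NonUnitalNonAssocSemiring 𝕜] [LE 𝕜] [Fintype C]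
    (M : Matrix R C 𝕜) (b : R → 𝕜) : Set (C → 𝕜) :=
  {x | (∀ c, 0 ≤ x c) ∧ M *ᵥ x = b}

/-- The columns covering a row `m` of a matrix at a point `x`. For `x ≥ 0` these are the columns
contributing a nonzero term to `m ⬝ᵥ x`. -/
def coveringColumns {𝕜 C : Type*} [Zero 𝕜] [LT 𝕜] (m x : C → 𝕜) : Set C :=
  {c | m c ≠ 0 ∧ 0 < x c}

section Perturbation

variable {𝕜 E R C : Type*} [Ring 𝕜] [LinearOrder 𝕜] [IsStrictOrderedRing 𝕜] [Invertible (2 : 𝕜)]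

theorem eq_zero_of_mem_extremePoints_of_add_mem_of_sub_mem [AddCommGroup E] [Module 𝕜 E]
    {A : Set E} {x d : E} (hx : x ∈ A.extremePoints 𝕜) (hadd : x + d ∈ A) (hsub : x - d ∈ A) :
    d = 0 := by
  have hmid : x ∈ openSegment 𝕜 (x + d) (x - d) := mem_openSegment_add_sub x d
  exact add_eq_left.mp (hx.2 hadd hsub hmid)

variable [Fintype C]

theorem eq_zero_of_mem_extremePoints_nonnegSolutions {M : Matrix R C 𝕜} {b : R → 𝕜} {x d : C → 𝕜}
    (hx : x ∈ (nonnegSolutions M b).extremePoints 𝕜) (hd : M *ᵥ d = 0) (hdx : ∀ c, |d c| ≤ x c) :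
    d = 0 := by
  have hMx : M *ᵥ x = b := hx.1.2
  refine eq_zero_of_mem_extremePoints_of_add_mem_of_sub_mem hx ⟨fun c => ?_, ?_⟩ ⟨fun c => ?_, ?_⟩
  · exact neg_le_iff_add_nonneg'.mp (neg_le_of_abs_le (hdx c))
  · rw [mulVec_add, hMx, hd, add_zero]
  · exact sub_nonneg.mpr (le_of_abs_le (hdx c))
  · rw [mulVec_sub, hMx, hd, sub_zero]

theorem eq_zero_of_mulVec_indicator_eq_zero {M : Matrix R C 𝕜} {b : R → 𝕜} {x : C → 𝕜}
    (hx : x ∈ (nonnegSolutions M b).extremePoints 𝕜) {S : Set C} (hS : M *ᵥ S.indicator x = 0)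
    {c : C} (hc : c ∈ S) : x c = 0 := by
  have hle (c : C) : |S.indicator x c| ≤ x c := by
    rw [abs_of_nonneg (Set.indicator_apply_nonneg fun _ => hx.1.1 c)]
    exact Set.indicator_apply_le' (fun _ => le_rfl) fun _ => hx.1.1 c
  have hzero := eq_zero_of_mem_extremePoints_nonnegSolutions hx hS hle
  rw [← Set.indicator_of_mem hc x, hzero, Pi.zero_apply]

end Perturbation

section Covering

variable {𝕜 C : Type*} [NonUnitalNonAssocSemiring 𝕜] [PartialOrder 𝕜] {m x : C → 𝕜}

theorem mul_eq_zero_of_notMem_coveringColumns {c : C} (hx : ∀ c, 0 ≤ x c)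
    (hc : c ∉ coveringColumns m x) :
    m c * x c = 0 := by
  by_contra hne
  exact hc ⟨left_ne_zero_of_mul hne, (hx c).lt_of_ne' (right_ne_zero_of_mul hne)⟩

variable [Fintype C]

theorem dotProduct_eq_sum_of_coveringColumns_subset (hx : ∀ c, 0 ≤ x c) {T : Finset C}
    (hT : coveringColumns m x ⊆ T) : m ⬝ᵥ x = ∑ c ∈ T, m c * x c :=
  (Finset.sum_subset T.subset_univ fun _ _ hc =>
    mul_eq_zero_of_notMem_coveringColumns hx fun h => hc (hT h)).symm

theorem dotProduct_indicator_of_coveringColumns_subset (hx : ∀ c, 0 ≤ x c) {S : Set C}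
    (hS : coveringColumns m x ⊆ S) : m ⬝ᵥ S.indicator x = m ⬝ᵥ x := by
  refine Finset.sum_congr rfl fun c _ => ?_
  by_cases hc : c ∈ S
  · rw [Set.indicator_of_mem hc]
  · rw [Set.indicator_of_notMem hc, mul_zero,
      mul_eq_zero_of_notMem_coveringColumns hx fun h => hc (hS h)]

theorem dotProduct_indicator_of_disjoint_coveringColumns (hx : ∀ c, 0 ≤ x c) {S : Set C}
    (hS : Disjoint (coveringColumns m x) S) : m ⬝ᵥ S.indicator x = 0 := by
  refine Finset.sum_eq_zero fun c _ => ?_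
  by_cases hc : c ∈ S
  · rw [Set.indicator_of_mem hc,
      mul_eq_zero_of_notMem_coveringColumns hx fun h => Set.disjoint_left.mp hS h hc]
  · rw [Set.indicator_of_notMem hc, mul_zero]

end Covering

section CoverCounting

variable {𝕜 C : Type*} [Ring 𝕜] [LinearOrder 𝕜] [IsStrictOrderedRing 𝕜] [Fintype C]
  {m x : C → 𝕜} {a c : C}

theorem abs_dotProduct_of_ncard_coveringColumns_le_one (hx : ∀ c, 0 ≤ x c)
    (hcard : (coveringColumns m x).ncard ≤ 1) (ha : a ∈ coveringColumns m x) :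
    |m ⬝ᵥ x| = |m a| * x a := by
  have hsub : coveringColumns m x ⊆ ({a} : Finset C) := fun c hc =>
    Finset.mem_singleton.mpr ((Set.ncard_le_one).mp hcard c hc a ha)
  rw [dotProduct_eq_sum_of_coveringColumns_subset hx hsub, Finset.sum_singleton, abs_mul,
    abs_of_nonneg (hx a)]

theorem eq_of_ncard_coveringColumns_le_two (hx : ∀ c, 0 ≤ x c)
    (hcard : (coveringColumns m x).ncard ≤ 2) (hdot : m ⬝ᵥ x = 0)
    (ha : a ∈ coveringColumns m x) (hc : c ∈ coveringColumns m x) (hmac : |m a| = |m c|) :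
    x a = x c := by
  classical
  obtain rfl | hac := eq_or_ne a c
  · rfl
  have hpair : {a, c} = coveringColumns m x :=
    Set.eq_of_subset_of_ncard_le (Set.pair_subset ha hc) (by rwa [Set.ncard_pair hac])
  have hsub : coveringColumns m x ⊆ ({a, c} : Finset C) := by
    rw [Finset.coe_pair, hpair]
  have hsum : m a * x a + m c * x c = 0 := by
    rw [← hdot, dotProduct_eq_sum_of_coveringColumns_subset hx hsub, Finset.sum_pair hac]
  have habs : |m c| * x a = |m c| * x c :=
    calc |m c| * x a = |m a * x a| := by rw [abs_mul, hmac, abs_of_nonneg (hx a)]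
      _ = |m c * x c| := by rw [eq_neg_of_add_eq_zero_left hsum, abs_neg]
      _ = |m c| * x c := by rw [abs_mul, abs_of_nonneg (hx c)]
  exact mul_left_cancel₀ (abs_ne_zero.mpr hc.1) habs

theorem dotProduct_indicator_preimage_eq_zero (hx : ∀ c, 0 ≤ x c)
    (hm : ∀ a c, m a ≠ 0 → m c ≠ 0 → |m a| = |m c|) (hcard : (coveringColumns m x).ncard ≤ 2)
    (hdot : m ⬝ᵥ x = 0) (V : Set 𝕜) : m ⬝ᵥ (x ⁻¹' V).indicator x = 0 := by
  by_cases hV : coveringColumns m x ⊆ x ⁻¹' V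
  · rw [dotProduct_indicator_of_coveringColumns_subset hx hV, hdot]
  obtain ⟨a, ha, haV⟩ := Set.not_subset.mp hV
  refine dotProduct_indicator_of_disjoint_coveringColumns hx (Set.disjoint_left.mpr fun c hc => ?_)
  have hac : x a = x c :=
    eq_of_ncard_coveringColumns_le_two hx hcard hdot ha hc (hm a c ha.1 hc.1)
  rwa [Set.mem_preimage, ← hac]

end CoverCounting

theorem extremePoint_pairwise_cover_zero_one_general {𝕜 R C : Type*} [Ring 𝕜] [LinearOrder 𝕜]
    [IsStrictOrderedRing 𝕜] [Invertible (2 : 𝕜)] [Fintype C] {M : Matrix R C 𝕜}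
    (hM : ∀ r c, M r c ≠ 0 → |M r c| = 1)
    {b : R → 𝕜} {x : C → 𝕜} (hx : x ∈ (nonnegSolutions M b).extremePoints 𝕜)
    (hcov : ∀ r, (coveringColumns (M r) x).ncard ≤ 2)
    (hbase : ∀ r, b r ≠ 0 → (coveringColumns (M r) x).ncard ≤ 1) (c : C) :
    x c = 0 ∨ ∃ r, x c = |b r| := by
  have hnonneg : ∀ c, 0 ≤ x c := hx.1.1
  have hrow (r : R) : M r ⬝ᵥ x = b r := congrFun hx.1.2 r
  let V : Set 𝕜 := {v | ∀ r, v ≠ |b r|}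
  have hker : M *ᵥ (x ⁻¹' V).indicator x = 0 := by
    funext r
    by_cases hr : b r = 0
    · have habs (a c : C) (ha : M r a ≠ 0) (hc : M r c ≠ 0) : |M r a| = |M r c| :=
        (hM r a ha).trans (hM r c hc).symm
      exact dotProduct_indicator_preimage_eq_zero hnonneg habs (hcov r) ((hrow r).trans hr) V
    · refine dotProduct_indicator_of_disjoint_coveringColumns hnonneg
        (Set.disjoint_left.mpr fun a ha haV => haV r ?_)
      rw [← hrow r, abs_dotProduct_of_ncard_coveringColumns_le_one hnonneg (hbase r hr) ha,
        hM r a ha.1, one_mul]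
  by_cases hc : x c ∈ V
  · exact .inl (eq_zero_of_mulVec_indicator_eq_zero hx hker hc)
  · exact .inr (by simpa only [V, Set.mem_ofPred_eq, not_forall, not_not] using hc)

/-- Let `M` be a finite real matrix with entries in `{0, 1, -1}`, `r₀` a row index,
`s ∈ {1, -1}`, and `x̄` an extreme point of `{x : x ≥ 0, M·x = s·e_{r₀}}`.  A column `c`
covers a row `r` if `M r c ≠ 0` and `x̄ c > 0`.  If every row is covered by at most two
columns and the row `r₀` is covered by at most one column, then every coordinate of `x̄`
lies in `{0, 1}`. -/
theorem extremePoint_pairwise_cover_zero_one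
    {R C : Type} [Fintype R] [Fintype C] [DecidableEq R]
    (M : Matrix R C ℝ) (hM : ∀ r c, M r c = 0 ∨ M r c = 1 ∨ M r c = -1)
    (r₀ : R) (s : ℝ) (hs : s = 1 ∨ s = -1)
    (x : C → ℝ)
    (hx : x ∈ Set.extremePoints ℝ
      {x' : C → ℝ | (∀ c, 0 ≤ x' c) ∧
        M.mulVec x' = fun r => s * (if r = r₀ then 1 else 0)})
    (hcov : ∀ r : R, Set.ncard {c : C | M r c ≠ 0 ∧ 0 < x c} ≤ 2)
    (hbase : Set.ncard {c : C | M r₀ c ≠ 0 ∧ 0 < x c} ≤ 1) :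
    ∀ c, x c = 0 ∨ x c = 1 := by
  have hentry (r : R) (c : C) (h : M r c ≠ 0) : |M r c| = 1 :=
    (abs_eq zero_le_one).mpr ((hM r c).resolve_left h)
  have hunit : |s| = 1 := (abs_eq zero_le_one).mpr hs
  have hbase' (r : R) (hr : s * (if r = r₀ then 1 else 0) ≠ 0) :
      (coveringColumns (M r) x).ncard ≤ 1 := by
    obtain rfl : r = r₀ := by
      by_contra h
      simp [h] at hr
    exact hbase
  intro c
  obtain h | ⟨r, h⟩ := extremePoint_pairwise_cover_zero_one_general hentry hx hcov hbase' c
  · exact .inl h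
  · by_cases hr : r = r₀ <;> simp [h, hr, hunit]
end

section
/- The convex hull of S equals the projection of the extended formulation: conv(S) = {(x, y, z) ∈ ℝⁿ × ℝᵐ × ℝ^K : y ≥ 0, Σ_{j=1}^m y_j ≤ 1, and there exist vectors w¹, …, w^m ∈ ℝⁿ such that z_k = w^{jc(k)}_{ic(k)} for every k ∈ K; E·w^j ≥ f·y_j and 0 ≤ w^j ≤ u·y_j for every j; and E·(x − Σ_{j=1}^m w^j) ≥ f·(1 − Σ_{j=1}^m y_j) and 0 ≤ x − Σ_{j=1}^m w^j ≤ u·(1 − Σ_{j=1}^m y_j)}. -/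
/-!
For fixed `x`, the products `y j * x i` are affine in `y`, so `conv S` is already the convex hull of
the copies of `Ξ` lying over the vertices `0, e₁, …, e_m` of the simplex. Disjunctive programming
describes such a hull: the vertex `e_j` carries the share `w j` of `x` with weight `y j`, and the
vertex `0` carries the share `x - ∑ j, w j` with weight `1 - ∑ j, y j`. Each pair (share, weight)
lies in the homogenization of `Ξ`. Dividing a share by its positive weight gives a point of `Ξ`,
and a share of weight zero vanishes because `Ξ` is bounded.
-/

open scoped Matrix

section CornerSimplex

variable {𝕜 J : Type*} [Fintype J]

variable (𝕜 J) in
/-- The simplex `Δ` with vertices `0` and the unit vectors. -/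
def cornerSimplex [Semiring 𝕜] [PartialOrder 𝕜] : Set (J → 𝕜) :=
  {y | 0 ≤ y ∧ ∑ j, y j ≤ 1}

theorem zero_mem_cornerSimplex [Semiring 𝕜] [PartialOrder 𝕜] [ZeroLEOneClass 𝕜] :
    (0 : J → 𝕜) ∈ cornerSimplex 𝕜 J := by
  simp [cornerSimplex]

theorem single_one_mem_cornerSimplex [Semiring 𝕜] [PartialOrder 𝕜] [ZeroLEOneClass 𝕜]
    [DecidableEq J] (j : J) : Pi.single j 1 ∈ cornerSimplex 𝕜 J := by
  simp [cornerSimplex]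

theorem convex_cornerSimplex [Semiring 𝕜] [PartialOrder 𝕜] [IsOrderedRing 𝕜] :
    Convex 𝕜 (cornerSimplex 𝕜 J) := by
  have isLinear_sum : IsLinearMap 𝕜 fun y : J → 𝕜 ↦ ∑ j, y j :=
    ⟨fun _ _ ↦ Finset.sum_add_distrib, fun _ _ ↦ (Finset.mul_sum ..).symm⟩
  exact (convex_Ici 0).inter (convex_halfSpace_le isLinear_sum 1)

end CornerSimplex

section BilinearSet

variable {𝕜 V Z J : Type*} [Fintype J] [AddCommGroup V] [AddCommGroup Z]

section OrderedRing

variable [Ring 𝕜] [PartialOrder 𝕜] [IsOrderedRing 𝕜] [Module 𝕜 V] [Module 𝕜 Z]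

/-- The set of points `(x, y, z)` with `x` in a convex set `Ξ`, `y ∈ Δ`, and `z` the image under `Φ`
of the family of products `y j • x`. The set `Ξ` is encoded by its homogenization `C`, as the slice
of `C` at height `1`. -/
def bilinearSet (C : PointedCone 𝕜 (V × 𝕜)) (Φ : (J → V) →ₗ[𝕜] Z) : Set (V × (J → 𝕜) × Z) :=
  {p | (p.1, 1) ∈ C ∧ p.2.1 ∈ cornerSimplex 𝕜 J ∧ p.2.2 = Φ fun j ↦ p.2.1 j • p.1}

/-- The projection to `(x, y, z)` of the disjunctive extended formulation of `bilinearSet C Φ`, in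
which `w j` stands for the product `y j • x`. -/
def extendedFormulation (C : PointedCone 𝕜 (V × 𝕜)) (Φ : (J → V) →ₗ[𝕜] Z) :
    Set (V × (J → 𝕜) × Z) :=
  {p | p.2.1 ∈ cornerSimplex 𝕜 J ∧ ∃ w : J → V, p.2.2 = Φ w ∧ (∀ j, (w j, p.2.1 j) ∈ C) ∧
    (p.1 - ∑ j, w j, 1 - ∑ j, p.2.1 j) ∈ C}

theorem bilinearSet_subset_extendedFormulation (C : PointedCone 𝕜 (V × 𝕜))
    (Φ : (J → V) →ₗ[𝕜] Z) : bilinearSet C Φ ⊆ extendedFormulation C Φ := by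
  rintro ⟨x, y, z⟩ ⟨hx, hy, hz⟩
  have smul_mem {t : 𝕜} (ht : 0 ≤ t) : (t • x, t) ∈ C := by
    simpa using C.smul_mem ht hx
  refine ⟨hy, fun j ↦ y j • x, hz, fun j ↦ smul_mem (hy.1 j), ?_⟩
  simpa [sub_smul, Finset.sum_smul] using smul_mem (sub_nonneg.2 hy.2)

theorem convex_extendedFormulation (C : PointedCone 𝕜 (V × 𝕜)) (Φ : (J → V) →ₗ[𝕜] Z) :
    Convex 𝕜 (extendedFormulation C Φ) := by
  rintro ⟨x, y, z⟩ ⟨hy, w, hz, hw, hr⟩ ⟨x', y', z'⟩ ⟨hy', w', hz', hw', hr'⟩ a b ha hb hab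
  have hC : Convex 𝕜 (C : Set (V × 𝕜)) := C.toConvexCone.convex
  refine ⟨convex_cornerSimplex hy hy' ha hb hab, a • w + b • w', ?_,
    fun j ↦ hC (hw j) (hw' j) ha hb hab, ?_⟩
  · dsimp only at hz hz'
    simp [hz, hz']
  · convert! hC hr hr' ha hb hab using 1
    ext
    · simp only [Prod.fst_add, Prod.smul_fst, Pi.add_apply, Pi.smul_apply, Finset.sum_add_distrib,
        ← Finset.smul_sum, smul_sub]
      abel
    · simp only [Prod.snd_add, Prod.smul_snd, Prod.fst_add, Prod.smul_fst, Pi.add_apply,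
        Pi.smul_apply, smul_eq_mul, Finset.sum_add_distrib, ← Finset.mul_sum, mul_sub, mul_one]
      rw [← hab]
      abel

end OrderedRing

section OrderedField

variable [Field 𝕜] [LinearOrder 𝕜] [IsStrictOrderedRing 𝕜] [Module 𝕜 V] [Module 𝕜 Z]

theorem sum_mem_convexHull_bilinearSet {ι : Type*} [Fintype ι] (C : PointedCone 𝕜 (V × 𝕜))
    (hC : ∀ v, (v, 0) ∈ C → v = 0) (Φ : (J → V) →ₗ[𝕜] Z) {v : ι → V} {t : ι → 𝕜}
    {y : ι → J → 𝕜} (ht : ∀ i, 0 ≤ t i) (ht_sum : ∑ i, t i = 1) (hv : ∀ i, (v i, t i) ∈ C)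
    (hy : ∀ i, y i ∈ cornerSimplex 𝕜 J) :
    ∑ i, (v i, t i • y i, Φ fun j ↦ y i j • v i) ∈ convexHull 𝕜 (bilinearSet C Φ) := by
  have weight_smul_inv_smul (i : ι) : t i • (t i)⁻¹ • v i = v i := by
    obtain hi | hi := eq_or_ne (t i) 0
    · rw [hi, zero_smul, hC (v i) (by simpa only [hi] using hv i)]
    · exact smul_inv_smul₀ hi _
  have point_mem (i : ι) (hi : t i ≠ 0) :
      ((t i)⁻¹ • v i, y i, Φ fun j ↦ y i j • (t i)⁻¹ • v i) ∈ bilinearSet C Φ := by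
    refine ⟨?_, hy i, rfl⟩
    simpa [hi] using C.smul_mem (inv_nonneg.2 (ht i)) (hv i)
  have smul_point (i : ι) :
      t i • ((t i)⁻¹ • v i, y i, Φ fun j ↦ y i j • (t i)⁻¹ • v i) =
        (v i, t i • y i, Φ fun j ↦ y i j • v i) := by
    simp only [Prod.smul_mk, ← map_smul, Pi.smul_def, smul_comm (t i) (y i _),
      weight_smul_inv_smul]
  simp only [← smul_point]
  rw [← finsum_eq_sum_of_fintype]
  exact (convex_convexHull 𝕜 _).finsum_mem ht (by rwa [finsum_eq_sum_of_fintype])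
    fun i hi ↦ subset_convexHull 𝕜 _ (point_mem i hi)

theorem extendedFormulation_subset_convexHull (C : PointedCone 𝕜 (V × 𝕜))
    (hC : ∀ v, (v, 0) ∈ C → v = 0) (Φ : (J → V) →ₗ[𝕜] Z) :
    extendedFormulation C Φ ⊆ convexHull 𝕜 (bilinearSet C Φ) := by
  classical
  rintro ⟨x, y, z⟩ ⟨hy, w, hz, hw, hr⟩
  dsimp only at hy hz hw hr
  let share : Option J → V := fun o ↦ o.elim (x - ∑ j, w j) w
  let weight : Option J → 𝕜 := fun o ↦ o.elim (1 - ∑ j, y j) y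
  let vertex : Option J → J → 𝕜 := fun o ↦ o.elim 0 fun j ↦ Pi.single j 1
  have weight_nonneg : ∀ o, 0 ≤ weight o := Option.rec (sub_nonneg.2 hy.2) hy.1
  have sum_weight : ∑ o, weight o = 1 := by simp [weight, Fintype.sum_option]
  have share_weight_mem : ∀ o, (share o, weight o) ∈ C := Option.rec hr hw
  have vertex_mem : ∀ o, vertex o ∈ cornerSimplex 𝕜 J :=
    Option.rec zero_mem_cornerSimplex single_one_mem_cornerSimplex
  have sum_share : ∑ o, share o = x := by simp [share, Fintype.sum_option]
  have sum_weight_smul_vertex : ∑ o, weight o • vertex o = y := by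
    ext l
    simp [weight, vertex, Fintype.sum_option, Pi.single_apply]
  have sum_vertex_smul_share : ∑ o, (fun j ↦ vertex o j • share o) = w := by
    ext l
    simp [share, vertex, Fintype.sum_option, Pi.single_apply]
  have sum_eq :
      ∑ o, (share o, weight o • vertex o, Φ fun j ↦ vertex o j • share o) = (x, y, z) := by
    rw [← prod_mk_sum, ← prod_mk_sum, ← map_sum, sum_share, sum_weight_smul_vertex,
      sum_vertex_smul_share, hz]
  exact sum_eq ▸
    sum_mem_convexHull_bilinearSet C hC Φ weight_nonneg sum_weight share_weight_mem vertex_mem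

theorem convexHull_bilinear_eq_extended_formulation_general (C : PointedCone 𝕜 (V × 𝕜))
    (hC : ∀ v, (v, 0) ∈ C → v = 0) (Φ : (J → V) →ₗ[𝕜] Z) :
    convexHull 𝕜 (bilinearSet C Φ) = extendedFormulation C Φ :=
  (convexHull_min (bilinearSet_subset_extendedFormulation C Φ)
    (convex_extendedFormulation C Φ)).antisymm (extendedFormulation_subset_convexHull C hC Φ)

end OrderedField

end BilinearSet

section Polytope

variable {𝕜 ι T : Type*} [Fintype ι] [CommRing 𝕜] [PartialOrder 𝕜] [IsOrderedRing 𝕜]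

/-- The homogenization of the polytope `{x | f ≤ E *ᵥ x ∧ 0 ≤ x ∧ x ≤ u}`: the pairs `(v, t)` that
satisfy its inequalities with right-hand sides multiplied by `t`. -/
def homogenizedPolytope (E : Matrix T ι 𝕜) (f : T → 𝕜) (u : ι → 𝕜) :
    PointedCone 𝕜 ((ι → 𝕜) × 𝕜) where
  carrier := {q | q.2 • f ≤ E *ᵥ q.1 ∧ 0 ≤ q.1 ∧ q.1 ≤ q.2 • u}
  zero_mem' := by simp
  add_mem' := by
    rintro ⟨v, s⟩ ⟨v', s'⟩ ⟨hE, h0, hu⟩ ⟨hE', h0', hu'⟩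
    refine ⟨?_, add_nonneg h0 h0', ?_⟩
    · simpa [add_smul, Matrix.mulVec_add] using add_le_add hE hE'
    · simpa [add_smul] using add_le_add hu hu'
  smul_mem' := by
    rintro ⟨c, hc⟩ ⟨v, t⟩ ⟨hE, h0, hu⟩
    refine ⟨?_, smul_nonneg hc h0, ?_⟩
    · simpa [Matrix.mulVec_smul, mul_smul] using smul_le_smul_of_nonneg_left hE hc
    · simpa [mul_smul] using smul_le_smul_of_nonneg_left hu hc

theorem eq_zero_of_mem_homogenizedPolytope {E : Matrix T ι 𝕜} {f : T → 𝕜} {u v : ι → 𝕜}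
    (hv : (v, 0) ∈ homogenizedPolytope E f u) : v = 0 := by
  obtain ⟨-, h0, hu⟩ := hv
  exact le_antisymm (by simpa using hu) h0

theorem mem_homogenizedPolytope {E : Matrix T ι 𝕜} {f : T → 𝕜} {u v : ι → 𝕜} {t : 𝕜} :
    (v, t) ∈ homogenizedPolytope E f u ↔
      (∀ k, f k * t ≤ ∑ i, E k i * v i) ∧ ∀ i, 0 ≤ v i ∧ v i ≤ u i * t := by
  simp only [mul_comm _ t, forall_and]
  rfl

end Polytope

/-- The linear map that selects from the family `w` its entries `w (jc k) (ic k)`, encoding matrices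
whose single nonzero entry is a `1` in row `jc k` and column `ic k`. -/
def entryMap {𝕜 J ι K : Type*} [Semiring 𝕜] (jc : K → J) (ic : K → ι) :
    (J → ι → 𝕜) →ₗ[𝕜] K → 𝕜 :=
  LinearMap.pi fun k ↦ LinearMap.proj (ic k) ∘ₗ LinearMap.proj (jc k)

/-- The convex hull of the bilinear set
`S = {(x, y, z) ∈ Ξ × Δ_m × ℝ^K : z_k = y_{jc k}·x_{ic k}}`, where
`Ξ = {x : E·x ≥ f, 0 ≤ x ≤ u}` and `Δ_m = {y : y ≥ 0, Σ_j y_j ≤ 1}`, equals the projection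
of the disjunctive extended formulation: the points `(x, y, z)` with `y ≥ 0`, `Σ_j y_j ≤ 1`
for which there exist `w¹, …, w^m ∈ ℝⁿ` with `z_k = w^{jc k}_{ic k}` for all `k`,
`E·w^j ≥ f·y_j` and `0 ≤ w^j ≤ u·y_j` for all `j`, and
`E·(x − Σ_j w^j) ≥ f·(1 − Σ_j y_j)` and `0 ≤ x − Σ_j w^j ≤ u·(1 − Σ_j y_j)`. -/
theorem convexHull_bilinear_eq_extended_formulation
    {n m τ : ℕ} {K : Type} [Fintype K]
    (E : Fin τ → Fin n → ℝ) (f : Fin τ → ℝ) (u : Fin n → ℝ)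
    (jc : K → Fin m) (ic : K → Fin n)
    (S : Set ((Fin n → ℝ) × (Fin m → ℝ) × (K → ℝ)))
    (hS : S = {p | (∀ ti, f ti ≤ ∑ i, E ti i * p.1 i) ∧
      (∀ i, 0 ≤ p.1 i ∧ p.1 i ≤ u i) ∧
      (∀ j, 0 ≤ p.2.1 j) ∧ (∑ j, p.2.1 j) ≤ 1 ∧
      (∀ k, p.2.2 k = p.2.1 (jc k) * p.1 (ic k))}) :
    convexHull ℝ S = {p : (Fin n → ℝ) × (Fin m → ℝ) × (K → ℝ) |
      (∀ j, 0 ≤ p.2.1 j) ∧ (∑ j, p.2.1 j) ≤ 1 ∧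
      ∃ w : Fin m → Fin n → ℝ,
        (∀ k, p.2.2 k = w (jc k) (ic k)) ∧
        (∀ j, (∀ ti, f ti * p.2.1 j ≤ ∑ i, E ti i * w j i) ∧
          (∀ i, 0 ≤ w j i ∧ w j i ≤ u i * p.2.1 j)) ∧
        (∀ ti, f ti * (1 - ∑ j, p.2.1 j) ≤ ∑ i, E ti i * (p.1 i - ∑ j, w j i)) ∧
        (∀ i, 0 ≤ p.1 i - ∑ j, w j i ∧
          p.1 i - ∑ j, w j i ≤ u i * (1 - ∑ j, p.2.1 j))} := by
  have h := convexHull_bilinear_eq_extended_formulation_general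
    (homogenizedPolytope (.of E) f u) (fun _ ↦ eq_zero_of_mem_homogenizedPolytope) (entryMap jc ic)
  simpa [hS, bilinearSet, extendedFormulation, cornerSimplex, mem_homogenizedPolytope, entryMap,
    Pi.le_def, funext_iff, and_assoc] using h
end
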